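/- Assume a₁₁, a₂₂, a₁₂ are of class C^{2,1} on [−1,1]², the matrix ((a₁₁,a₁₂),(a₁₂,a₂₂)) is symmetric positive definite at every point of [−1,1]², |a₁₂| < min(a₁₁, a₂₂) pointwise, and a is continuous with a ≥ 0. Let γ be a C² regular simple closed curve contained in the open square (−1,1)² and let K > 0. Then there exist constants C > 0 and h₀ > 0 such that for every even N with h = 2/N < h₀, every constant C̄ > 0, and every grid function e defined on all grid nodes and vanishing at every boundary node, the following holds: if |(L_h e)(x_i,y_j)| ≤ C̄ h at every interior node whose distance to γ is at most K h, and |(L_h e)(x_i,y_j)| ≤ C̄ h² at every other interior node, then max over all grid nodes of |e(x_i,y_j)| ≤ C C̄ h². -/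

import Mathlib

open Set

noncomputable section

/-- The closed square `[-1,1]²` as a subset of `ℝ × ℝ`. -/
def Q2 : Set (ℝ × ℝ) := Set.Icc ((-1 : ℝ), (-1 : ℝ)) (1, 1)

/-- `f` is of class `C^{2,1}` on `s`: twice continuously differentiable with Lipschitz
continuous second derivatives. -/
def C21On (f : ℝ × ℝ → ℝ) (s : Set (ℝ × ℝ)) : Prop :=
  ContDiffOn ℝ 2 f s ∧ ∃ K : NNReal, LipschitzOnWith K (iteratedFDerivWithin ℝ 2 f s) s

/-- Grid node `(x_i, y_j) = (-1 + i h, -1 + j h)` with `h = 2/N`. -/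
def nodePt (N i j : ℕ) : ℝ × ℝ := (-1 + i * (2 / (N : ℝ)), -1 + j * (2 / (N : ℝ)))

/-- The five-point operator `L_h⁰`. -/
def Lh0 (a11 a22 a : ℝ × ℝ → ℝ) (h : ℝ) (v : ℝ × ℝ → ℝ) (z : ℝ × ℝ) : ℝ :=
  (a11 (z.1 - h / 2, z.2) * v (z.1 - h, z.2) + a11 (z.1 + h / 2, z.2) * v (z.1 + h, z.2)
    + a22 (z.1, z.2 - h / 2) * v (z.1, z.2 - h) + a22 (z.1, z.2 + h / 2) * v (z.1, z.2 + h)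
    - (a11 (z.1 - h / 2, z.2) + a11 (z.1 + h / 2, z.2)
        + a22 (z.1, z.2 - h / 2) + a22 (z.1, z.2 + h / 2)) * v z) / h ^ 2
  - a z * v z

/-- The mixed-term operator `L_h⁻` (designed for negative `a₁₂`). -/
def Lhm (a12 : ℝ × ℝ → ℝ) (h : ℝ) (v : ℝ × ℝ → ℝ) (z : ℝ × ℝ) : ℝ :=
  (1 / (2 * h ^ 2)) *
    (-(a12 (z.1 - h / 2, z.2 + h) + a12 (z.1 - h, z.2 + h / 2)) * v (z.1 - h, z.2 + h)
      + (a12 (z.1 - h / 2, z.2 + h) + a12 (z.1, z.2 + h / 2)) * v (z.1, z.2 + h)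
      + (a12 (z.1 - h, z.2 + h / 2) + a12 (z.1 - h / 2, z.2)) * v (z.1 - h, z.2)
      - (a12 (z.1, z.2 + h / 2) + a12 (z.1 - h / 2, z.2)
          + a12 (z.1, z.2 - h / 2) + a12 (z.1 + h / 2, z.2)) * v z
      + (a12 (z.1 + h, z.2 - h / 2) + a12 (z.1 + h / 2, z.2)) * v (z.1 + h, z.2)
      + (a12 (z.1, z.2 - h / 2) + a12 (z.1 + h / 2, z.2 - h)) * v (z.1, z.2 - h)
      - (a12 (z.1 + h, z.2 - h / 2) + a12 (z.1 + h / 2, z.2 - h)) * v (z.1 + h, z.2 - h))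

/-- The mixed-term operator `L_h⁺` (designed for nonnegative `a₁₂`). -/
def Lhp (a12 : ℝ × ℝ → ℝ) (h : ℝ) (v : ℝ × ℝ → ℝ) (z : ℝ × ℝ) : ℝ :=
  (1 / (2 * h ^ 2)) *
    (-(a12 (z.1 + h / 2, z.2 + h) + a12 (z.1, z.2 + h / 2)) * v (z.1, z.2 + h)
      + (a12 (z.1 + h / 2, z.2 + h) + a12 (z.1 + h, z.2 + h / 2)) * v (z.1 + h, z.2 + h)
      - (a12 (z.1 - h, z.2 - h / 2) + a12 (z.1 - h / 2, z.2)) * v (z.1 - h, z.2)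
      + (a12 (z.1, z.2 + h / 2) + a12 (z.1 - h / 2, z.2)
          + a12 (z.1, z.2 - h / 2) + a12 (z.1 + h / 2, z.2)) * v z
      - (a12 (z.1 + h, z.2 + h / 2) + a12 (z.1 + h / 2, z.2)) * v (z.1 + h, z.2)
      + (a12 (z.1 - h, z.2 - h / 2) + a12 (z.1 - h / 2, z.2 - h)) * v (z.1 - h, z.2 - h)
      - (a12 (z.1, z.2 - h / 2) + a12 (z.1 - h / 2, z.2 - h)) * v (z.1, z.2 - h))

/-- The sign-adapted seven-point operator `L_h`. -/
def Lh (a11 a22 a12 a : ℝ × ℝ → ℝ) (h : ℝ) (v : ℝ × ℝ → ℝ) (z : ℝ × ℝ) : ℝ :=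
  if a12 z < 0 then Lh0 a11 a22 a h v z + Lhm a12 h v z
  else Lh0 a11 a22 a h v z + Lhp a12 h v z

/-- The Euclidean distance from a point `z ∈ ℝ²` to the image `γ = r([0,1])` of a curve. -/
def distToCurve (r : ℝ → ℝ × ℝ) (z : ℝ × ℝ) : ℝ :=
  sInf ((fun t => Real.sqrt ((z.1 - (r t).1) ^ 2 + (z.2 - (r t).2) ^ 2)) '' Icc 0 1)

/-!
Scaled by `h ^ 2`, the operator `L_h` is a sum of weighted differences over the eight neighbours of
a node. For `h = 0` the weights are nonnegative, by dominance of the mixed coefficient, and even;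
for `h > 0` they are perturbed by `O(h)`, so that a diagonal weight may become slightly negative
and the usual minimum principle fails. Every diagonal step is a sum of two axis steps, however, and
the axis weights are bounded away from zero. Hence, instead of the minimum of a grid function `W`,
one looks at the minimum of its defect `W - α ∑ W(· + axis step)`, with `α` small but fixed, which
absorbs the negative weights.

This comparison principle reduces the theorem to a bounded barrier whose image under `L_h` is at
least `1` everywhere and at least `1 / h` near the curve. An exponential provides the first bound.
For the second, the curve is covered by finitely many graphs, each the zero set of a function `d`
with bounded second differences and with slope one along an axis: at distance `O(h)` from the graph
the second difference of `√(d ^ 2 + m ^ 2)`, with `m` a large multiple of `h`, is comparable to `h`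
instead of `h ^ 2`, and elsewhere it is bounded below by `-O(h ^ 2)`. As the unperturbed
weights are even, only second differences enter, up to the `O(h)` perturbation of the weights.
-/

section Comparison

variable {G κ : Type*} [AddCommGroup G] {S A : Finset κ} {σ : κ → G} {c : κ → ℝ}
  {c₀ s α : ℝ} {W : G → ℝ} {x : G}

/-- The difference operator `v ↦ ∑ k ∈ S, c k * (v (· + σ k) - v ·)` with stencil `σ '' S` and
weights `c`. An operator with variable weights is evaluated at `x` with the weights it has at `x`,
and its zeroth-order term is kept apart. -/
def stencilOp (S : Finset κ) (σ : κ → G) (c : κ → ℝ) : (G → ℝ) →ₗ[ℝ] G → ℝ :=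
  ∑ k ∈ S, c k • (LinearMap.funLeft ℝ ℝ (· + σ k) - LinearMap.id)

theorem stencilOp_apply (S : Finset κ) (σ : κ → G) (c : κ → ℝ) (v : G → ℝ) (x : G) :
    stencilOp S σ c v x = ∑ k ∈ S, c k * (v (x + σ k) - v x) := by
  simp [stencilOp, LinearMap.funLeft_apply]

theorem stencilOp_eq_sub (S : Finset κ) (σ : κ → G) (c : κ → ℝ) (v : G → ℝ) (x : G) :
    stencilOp S σ c v x = ∑ k ∈ S, c k * v (x + σ k) - (∑ k ∈ S, c k) * v x := by
  simp only [stencilOp_apply, mul_sub, Finset.sum_sub_distrib, Finset.sum_mul]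

/-- A stencil containing the principal steps `A`, whose other steps are sums of two steps
in `A`. -/
structure IsGeneratedStencil (S A : Finset κ) (σ : κ → G) : Prop where
  nonempty : A.Nonempty
  subset : A ⊆ S
  exists_add : ∀ k ∈ S, k ∉ A → ∃ i ∈ A, ∃ j ∈ A, σ k = σ i + σ j

/-- Weights `c` and a zeroth-order coefficient `s` for which `stencilOp S σ c - s` is almost
monotone: on the principal steps `A` the weights are at least `c₀`, and on the whole stencil they
may be negative only by an amount controlled by `c₀` and the parameter `α`, which also limits
the total mass. -/
structure IsNearlyMonotone (S A : Finset κ) (c₀ α : ℝ) (c : κ → ℝ) (s : ℝ) : Prop where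
  principal : ∀ k ∈ A, c₀ ≤ c k
  neg_le : ∀ k ∈ S, -(α * c₀ / 2) ≤ S.card * c k
  zeroth_nonneg : 0 ≤ s
  mass_le : α * (∑ k ∈ S, c k + s) ≤ c₀ / 2

namespace IsNearlyMonotone

theorem principal_sum_le_sum (hS : IsGeneratedStencil S A σ)
    (hc : IsNearlyMonotone S A c₀ α c s) (hc₀ : 0 ≤ c₀) (hα : 0 ≤ α) {w : κ → ℝ} {T : ℝ}
    (hw : ∀ k ∈ S, 0 ≤ w k) (hwT : ∀ k ∈ S, k ∉ A → w k ≤ T) (hT : 0 ≤ T) :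
    c₀ * ∑ i ∈ A, w i - α * c₀ / 2 * T ≤ ∑ k ∈ S, c k * w k := by
  classical
  have hS0 : (0 : ℝ) < S.card := by exact_mod_cast (hS.nonempty.mono hS.subset).card_pos
  have hother : ∀ k ∈ S \ A, -(α * c₀ / 2 / S.card * T) ≤ c k * w k := fun k hk ↦ by
    obtain ⟨hkS, hkA⟩ := Finset.mem_sdiff.1 hk
    have hck : -(α * c₀ / 2 / S.card) ≤ c k := by
      rw [← neg_div, div_le_iff₀' hS0]
      exact hc.neg_le k hkS
    have hbS : 0 ≤ α * c₀ / 2 / S.card := by positivity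
    nlinarith [mul_le_mul_of_nonneg_right hck (hw k hkS),
      mul_le_mul_of_nonneg_left (hwT k hkS hkA) hbS]
  have hcard : -(α * c₀ / 2 * T) ≤ (S \ A).card • -(α * c₀ / 2 / S.card * T) := by
    have hle : ((S \ A).card : ℝ) ≤ S.card := by
      exact_mod_cast Finset.card_le_card Finset.sdiff_subset
    calc -(α * c₀ / 2 * T) = S.card * -(α * c₀ / 2 / S.card * T) := by field_simp
      _ ≤ _ := by
        rw [nsmul_eq_mul]
        exact mul_le_mul_of_nonpos_right hle (neg_nonpos.2 (by positivity))
  calc c₀ * ∑ i ∈ A, w i - α * c₀ / 2 * T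
      ≤ ∑ k ∈ A, c k * w k + ∑ k ∈ S \ A, c k * w k := by
        rw [sub_eq_add_neg, Finset.mul_sum]
        exact add_le_add
          (Finset.sum_le_sum fun i hi ↦
            mul_le_mul_of_nonneg_right (hc.principal i hi) (hw i (hS.subset hi)))
          (hcard.trans (Finset.card_nsmul_le_sum _ _ _ hother))
    _ = ∑ k ∈ S, c k * w k := by rw [add_comm, Finset.sum_sdiff hS.subset]

theorem half_card_mul_le_mass (hS : IsGeneratedStencil S A σ)
    (hc : IsNearlyMonotone S A c₀ α c s) (hc₀ : 0 ≤ c₀) (hα : 0 ≤ α)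
    (hα4 : 4 * α * A.card ≤ 1) : c₀ / 2 * A.card ≤ ∑ k ∈ S, c k + s := by
  have hA : (1 : ℝ) ≤ A.card := by exact_mod_cast hS.nonempty.card_pos
  have hsum := hc.principal_sum_le_sum hS hc₀ hα (w := fun _ ↦ 1) (T := 1)
    (fun _ _ ↦ zero_le_one) (fun _ _ _ ↦ le_rfl) zero_le_one
  simp only [mul_one, Finset.sum_const, nsmul_eq_mul] at hsum
  have hα1 : α ≤ A.card := by nlinarith
  linarith [mul_le_mul_of_nonneg_right hα1 hc₀, hc.zeroth_nonneg]

end IsNearlyMonotone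

/-- The amount by which `α` times the sum over the neighbours along `A` falls short of the value
at the centre. It replaces the grid function itself in the minimum principle for nearly monotone
weights. -/
def neighborDefect (A : Finset κ) (σ : κ → G) (α : ℝ) (W : G → ℝ) (x : G) : ℝ :=
  W x - α * ∑ i ∈ A, W (x + σ i)

theorem le_of_neighborDefect_nonneg {M : ℝ} (hα : 0 ≤ α) (hα4 : 4 * α * A.card ≤ 1)
    (hM : 0 ≤ M) (hW : ∀ y, W y ≤ 4 * M) (hx : M ≤ W x) : 0 ≤ neighborDefect A σ α W x := by
  have hsum : ∑ i ∈ A, W (x + σ i) ≤ A.card * (4 * M) := by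
    simpa only [nsmul_eq_mul] using Finset.sum_le_card_nsmul A _ _ fun i _ ↦ hW (x + σ i)
  unfold neighborDefect
  nlinarith [mul_le_mul_of_nonneg_left hsum hα]

-- The values of `W` at the other neighbours, which may carry negative weights, occur among those
-- at the second neighbours along `A`, and these are subtracted in the defects at `x + σ i`.
theorem IsNearlyMonotone.neg_stencilOp_le (hS : IsGeneratedStencil S A σ)
    (hc : IsNearlyMonotone S A c₀ α c s) (hc₀ : 0 ≤ c₀) (hα : 0 ≤ α) (hW : ∀ y, 0 ≤ W y) (x : G) :
    -(stencilOp S σ c W x - s * W x) ≤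
      (∑ k ∈ S, c k + s) * neighborDefect A σ α W x
        - c₀ / 2 * ∑ i ∈ A, neighborDefect A σ α W (x + σ i) := by
  set T := ∑ i ∈ A, ∑ j ∈ A, W (x + σ i + σ j) with hT
  have hle : ∀ k ∈ S, k ∉ A → W (x + σ k) ≤ T := fun k hk hkA ↦ by
    obtain ⟨i, hi, j, hj, hij⟩ := hS.exists_add k hk hkA
    calc W (x + σ k) = W (x + σ i + σ j) := by rw [hij, add_assoc]
      _ ≤ ∑ j ∈ A, W (x + σ i + σ j) :=
        Finset.single_le_sum (f := fun j ↦ W (x + σ i + σ j)) (fun _ _ ↦ hW _) hj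
      _ ≤ T := Finset.single_le_sum (f := fun i ↦ ∑ j ∈ A, W (x + σ i + σ j))
        (fun _ _ ↦ Finset.sum_nonneg fun _ _ ↦ hW _) hi
  have hmain := hc.principal_sum_le_sum hS hc₀ hα (w := fun k ↦ W (x + σ k)) (fun _ _ ↦ hW _) hle
    (Finset.sum_nonneg fun _ _ ↦ Finset.sum_nonneg fun _ _ ↦ hW _)
  have hmass := mul_le_mul_of_nonneg_right hc.mass_le
    (Finset.sum_nonneg fun i (_ : i ∈ A) ↦ hW (x + σ i))
  simp only [stencilOp_eq_sub, neighborDefect, Finset.sum_sub_distrib, ← Finset.mul_sum, ← hT]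
  linarith

theorem pos_of_stencilOp_neg {M : ℝ} {Ω : Finset G} (hS : IsGeneratedStencil S A σ) (hc₀ : 0 ≤ c₀)
    (hα : 0 ≤ α) (hα4 : 4 * α * A.card ≤ 1) (hM : 0 < M) (hW0 : ∀ y, 0 ≤ W y)
    (hW : ∀ y, W y ≤ 4 * M) (hout : ∀ y ∉ Ω, M ≤ W y)
    (hin : ∀ y ∈ Ω, ∃ c s, IsNearlyMonotone S A c₀ α c s ∧ stencilOp S σ c W y - s * W y < 0)
    (x : G) : 0 < W x := by
  by_cases hx : x ∈ Ω
  swap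
  · exact hM.trans_le (hout x hx)
  obtain ⟨y, hy, hmin⟩ := Ω.exists_min_image (neighborDefect A σ α W) ⟨x, hx⟩
  suffices hpos : 0 < neighborDefect A σ α W y by
    have := hpos.trans_le (hmin x hx)
    unfold neighborDefect at this
    linarith [mul_nonneg hα (Finset.sum_nonneg fun i (_ : i ∈ A) ↦ hW0 (x + σ i))]
  by_contra! hneg
  have hneighbor : ∀ i ∈ A, neighborDefect A σ α W y ≤ neighborDefect A σ α W (y + σ i) := by
    intro i _
    by_cases hi : y + σ i ∈ Ω
    · exact hmin _ hi
    · exact hneg.trans (le_of_neighborDefect_nonneg hα hα4 hM.le hW (hout _ hi))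
  obtain ⟨c, s, hc, hlt⟩ := hin y hy
  have hsum := Finset.card_nsmul_le_sum A _ _ hneighbor
  rw [nsmul_eq_mul] at hsum
  nlinarith [hc.neg_stencilOp_le hS hc₀ hα hW0 y, mul_le_mul_of_nonneg_left hsum hc₀,
    mul_le_mul_of_nonpos_right (hc.half_card_mul_le_mass hS hc₀ hα hα4) hneg]

theorem lt_mul_of_stencilOp_lt {Ω : Finset G} {Φ E : G → ℝ} {m t : ℝ}
    (hS : IsGeneratedStencil S A σ) (hc₀ : 0 ≤ c₀) (hα : 0 ≤ α) (hα4 : 4 * α * A.card ≤ 1)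
    (hm : 0 < m) (ht : 1 ≤ t) (hΦ : ∀ y, Φ y ∈ Icc m (2 * m)) (hE : ∀ y ∉ Ω, E y = 0)
    (hEt : ∀ y, |E y| ≤ t * Φ y)
    (hin : ∀ y ∈ Ω, ∃ c s, IsNearlyMonotone S A c₀ α c s ∧
      |stencilOp S σ c E y - s * E y| < -(stencilOp S σ c Φ y - s * Φ y)) (x : G) :
    E x < t * Φ x := by
  have ht0 : 0 < t := zero_lt_one.trans_le ht
  refine sub_pos.1 (pos_of_stencilOp_neg (W := t • Φ - E) (M := t * m) (Ω := Ω) hS hc₀ hα hα4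
    (mul_pos ht0 hm) (fun y ↦ ?_) (fun y ↦ ?_) (fun y hy ↦ ?_) (fun y hy ↦ ?_) x)
  · exact sub_nonneg.2 (le_of_abs_le (hEt y))
  · simp only [Pi.sub_apply, Pi.smul_apply, smul_eq_mul]
    nlinarith [neg_le_of_abs_le (hEt y), (hΦ y).2]
  · simp only [Pi.sub_apply, Pi.smul_apply, smul_eq_mul, hE y hy, sub_zero]
    exact mul_le_mul_of_nonneg_left (hΦ y).1 ht0.le
  · obtain ⟨c, s, hc, hlt⟩ := hin y hy
    refine ⟨c, s, hc, ?_⟩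
    simp only [map_sub, map_smul, Pi.sub_apply, Pi.smul_apply, smul_eq_mul]
    nlinarith [neg_le_of_abs_le hlt.le, (abs_nonneg _).trans_lt hlt, (abs_lt.1 hlt).1]

theorem abs_le_of_stencilOp_lt {Ω : Finset G} {Φ E : G → ℝ} {m : ℝ}
    (hS : IsGeneratedStencil S A σ) (hc₀ : 0 ≤ c₀) (hα : 0 ≤ α) (hα4 : 4 * α * A.card ≤ 1)
    (hm : 0 < m) (hΦ : ∀ y, Φ y ∈ Icc m (2 * m)) (hE : ∀ y ∉ Ω, E y = 0)
    (hin : ∀ y ∈ Ω, ∃ c s, IsNearlyMonotone S A c₀ α c s ∧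
      |stencilOp S σ c E y - s * E y| < -(stencilOp S σ c Φ y - s * Φ y)) (x : G) :
    |E x| ≤ Φ x := by
  have hΦpos : ∀ y, 0 < Φ y := fun y ↦ hm.trans_le (hΦ y).1
  by_cases hx : x ∈ Ω
  swap
  · rw [hE x hx, abs_zero]
    exact (hΦpos x).le
  obtain ⟨x₀, _, hmax⟩ := Ω.exists_max_image (fun y ↦ |E y| / Φ y) ⟨x, hx⟩
  set t := |E x₀| / Φ x₀
  suffices ht1 : t ≤ 1 from (div_le_one (hΦpos x)).1 ((hmax x hx).trans ht1)
  by_contra! ht1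
  have hEt : ∀ y, |E y| ≤ t * Φ y := fun y ↦ by
    by_cases hy : y ∈ Ω
    · exact (div_le_iff₀ (hΦpos y)).1 (hmax y hy)
    · rw [hE y hy, abs_zero]
      exact mul_nonneg (zero_le_one.trans ht1.le) (hΦpos y).le
  have hlt := lt_mul_of_stencilOp_lt hS hc₀ hα hα4 hm ht1.le hΦ hE hEt hin x₀
  have hlt_neg := lt_mul_of_stencilOp_lt (E := -E) hS hc₀ hα hα4 hm ht1.le hΦ
    (fun y hy ↦ by simp [hE y hy]) (by simpa using hEt) (fun y hy ↦ by
      obtain ⟨c, s, hc, h⟩ := hin y hy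
      exact ⟨c, s, hc, by simpa [← neg_add', abs_neg, neg_add_eq_sub, abs_sub_comm] using h⟩) x₀
  have htouch : t * Φ x₀ = |E x₀| := div_mul_cancel₀ _ (hΦpos x₀).ne'
  exact (abs_lt.2 ⟨neg_lt.1 hlt_neg, hlt⟩).ne htouch.symm

end Comparison

section SymmetricPerturbation

variable {G κ : Type*} [AddCommGroup G] {S A : Finset κ} {σ : κ → G} {c w : κ → ℝ}
  {c₀ B δ : ℝ}

/-- The centred second difference of `v` at `x` with step `d`. -/
def secondDiff (v : G → ℝ) (x d : G) : ℝ := v (x + d) + v (x - d) - 2 * v x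

theorem secondDiff_add (u v : G → ℝ) (x d : G) :
    secondDiff (u + v) x d = secondDiff u x d + secondDiff v x d := by
  simp only [secondDiff, Pi.add_apply]
  ring

/-- Weights `c` that differ by at most `δ` from weights `w` which are even, nonnegative, at most
`B`, and at least `c₀` on the principal steps `A`. In a difference scheme for a second-order
operator with Lipschitz coefficients, `w` arises by freezing the coefficients at the centre. -/
structure IsSymmetricPerturbation [Neg κ] (S A : Finset κ) (c₀ B δ : ℝ) (c w : κ → ℝ) : Prop where
  even : ∀ k ∈ S, w (-k) = w k
  nonneg : ∀ k ∈ S, 0 ≤ w k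
  le_bound : ∀ k ∈ S, w k ≤ B
  principal : ∀ k ∈ A, c₀ ≤ w k
  abs_sub_le : ∀ k ∈ S, |c k - w k| ≤ δ

theorem stencilOp_eq_sum_secondDiff [InvolutiveNeg κ] (hS : ∀ k ∈ S, -k ∈ S)
    (hσ : ∀ k, σ (-k) = -σ k) (hw : ∀ k ∈ S, w (-k) = w k) (v : G → ℝ) (x : G) :
    stencilOp S σ w v x = (∑ k ∈ S, w k * secondDiff v x (σ k)) / 2 := by
  have hneg : ∑ k ∈ S, w k * (v (x - σ k) - v x) = stencilOp S σ w v x := by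
    rw [stencilOp_apply]
    refine Finset.sum_nbij' (- ·) (- ·) hS hS (fun k _ ↦ neg_neg k) (fun k _ ↦ neg_neg k) ?_
    intro k hk
    rw [hw k hk, hσ, sub_eq_add_neg x]
  have hsum : ∑ k ∈ S, w k * secondDiff v x (σ k) =
      stencilOp S σ w v x + ∑ k ∈ S, w k * (v (x - σ k) - v x) := by
    rw [stencilOp_apply, ← Finset.sum_add_distrib]
    exact Finset.sum_congr rfl fun k _ ↦ by unfold secondDiff; ring
  rw [hsum, hneg, add_self_div_two]

namespace IsSymmetricPerturbation

theorem isNearlyMonotone [Neg κ] {s α : ℝ} (hc : IsSymmetricPerturbation S A c₀ B δ c w)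
    (hA : A ⊆ S) (hs : 0 ≤ s) (hδ : δ ≤ c₀ / 2) (hSδ : S.card * δ ≤ α * c₀ / 4) (hα : 0 ≤ α)
    (hmass : α * (S.card * (B + δ) + s) ≤ c₀ / 4) : IsNearlyMonotone S A (c₀ / 2) α c s where
  principal k hk := by
    linarith [neg_le_of_abs_le (hc.abs_sub_le k (hA hk)), hc.principal k hk]
  neg_le k hk := by
    have hck : -δ ≤ c k := by linarith [neg_le_of_abs_le (hc.abs_sub_le k hk), hc.nonneg k hk]
    linarith [mul_le_mul_of_nonneg_left hck (Nat.cast_nonneg (α := ℝ) S.card)]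
  zeroth_nonneg := hs
  mass_le := by
    have hsum : ∑ k ∈ S, c k ≤ S.card * (B + δ) := by
      rw [← nsmul_eq_mul]
      exact Finset.sum_le_card_nsmul S c _ fun k hk ↦ by
        linarith [le_of_abs_le (hc.abs_sub_le k hk), hc.le_bound k hk]
    linarith [mul_le_mul_of_nonneg_left (add_le_add_left hsum s) hα]

theorem le_stencilOp [InvolutiveNeg κ] (hc : IsSymmetricPerturbation S A c₀ B δ c w)
    (hS : ∀ k ∈ S, -k ∈ S) (hA : A ⊆ S) (hσ : ∀ k, σ (-k) = -σ k) {v : G → ℝ} {x : G} {q P : ℝ}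
    (hq : 0 ≤ q) (hconvex : ∀ k ∈ S, -q ≤ secondDiff v x (σ k))
    (hP : ∀ k ∈ S, |v (x + σ k) - v x| ≤ P) {k₀ : κ} (hk₀ : k₀ ∈ A) :
    c₀ / 2 * (secondDiff v x (σ k₀) + q) - S.card * (B / 2 * q + δ * P) ≤
      stencilOp S σ c v x := by
  have hconvex' : ∀ k ∈ S, 0 ≤ secondDiff v x (σ k) + q := fun k hk ↦ by linarith [hconvex k hk]
  have hsplit : stencilOp S σ c v x = stencilOp S σ w v x + stencilOp S σ (c - w) v x := by
    simp only [stencilOp_apply, ← Finset.sum_add_distrib, Pi.sub_apply]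
    exact Finset.sum_congr rfl fun k _ ↦ by ring
  have hpert : S.card * -(δ * P) ≤ stencilOp S σ (c - w) v x := by
    rw [stencilOp_apply, ← nsmul_eq_mul]
    refine Finset.card_nsmul_le_sum _ _ _ fun k hk ↦ neg_le_of_abs_le ?_
    rw [abs_mul]
    have hδ := hc.abs_sub_le k hk
    exact mul_le_mul hδ (hP k hk) (abs_nonneg _) ((abs_nonneg _).trans hδ)
  have hsym : c₀ * (secondDiff v x (σ k₀) + q) - S.card * (B * q) ≤
      ∑ k ∈ S, w k * secondDiff v x (σ k) := calc
    _ ≤ w k₀ * (secondDiff v x (σ k₀) + q) - ∑ k ∈ S, w k * q := by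
      have hle : ∑ k ∈ S, w k * q ≤ S.card • (B * q) := Finset.sum_le_card_nsmul S _ _ fun k hk ↦
        mul_le_mul_of_nonneg_right (hc.le_bound k hk) hq
      rw [nsmul_eq_mul] at hle
      exact sub_le_sub
        (mul_le_mul_of_nonneg_right (hc.principal k₀ hk₀) (hconvex' k₀ (hA hk₀))) hle
    _ ≤ ∑ k ∈ S, w k * (secondDiff v x (σ k) + q) - ∑ k ∈ S, w k * q := by
      refine sub_le_sub_right (Finset.single_le_sum
        (f := fun k ↦ w k * (secondDiff v x (σ k) + q)) (fun k hk ↦ ?_) (hA hk₀)) _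
      exact mul_nonneg (hc.nonneg k hk) (hconvex' k hk)
    _ = _ := by simp only [mul_add, Finset.sum_add_distrib, add_sub_cancel_right]
  rw [hsplit, stencilOp_eq_sum_secondDiff hS hσ hc.even]
  linarith

end IsSymmetricPerturbation

end SymmetricPerturbation

section SevenPointScheme

/-- The unit steps along the coordinate axes. -/
def axisSteps : Finset (ℤ × ℤ) := {(1, 0), (-1, 0), (0, 1), (0, -1)}

/-- The steps from a node of a square lattice to its eight neighbours. -/
def neighborSteps : Finset (ℤ × ℤ) :=
  {(1, 0), (-1, 0), (0, 1), (0, -1), (1, 1), (-1, -1), (1, -1), (-1, 1)}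

theorem sum_neighborSteps (f : ℤ × ℤ → ℝ) :
    ∑ k ∈ neighborSteps, f k = f (1, 0) + f (-1, 0) + f (0, 1) + f (0, -1) + f (1, 1) +
      f (-1, -1) + f (1, -1) + f (-1, 1) := by
  simp [neighborSteps, add_assoc]

/-- The vector of a lattice step in the square lattice of mesh size `h`. -/
def gridStep (h : ℝ) (k : ℤ × ℤ) : ℝ × ℝ := h • ((k.1 : ℝ), (k.2 : ℝ))

theorem gridStep_neg (h : ℝ) (k : ℤ × ℤ) : gridStep h (-k) = -gridStep h k := by
  simp [gridStep]

theorem gridStep_add (h : ℝ) (k l : ℤ × ℤ) :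
    gridStep h (k + l) = gridStep h k + gridStep h l := by
  simp [gridStep, mul_add]

theorem isGeneratedStencil_neighborSteps (h : ℝ) :
    IsGeneratedStencil neighborSteps axisSteps (gridStep h) where
  nonempty := by decide
  subset := by decide
  exists_add := by
    have hsplit : ∀ k ∈ neighborSteps, k ∉ axisSteps →
        ∃ i ∈ axisSteps, ∃ j ∈ axisSteps, k = i + j := by decide
    intro k hk hkA
    obtain ⟨i, hi, j, hj, rfl⟩ := hsplit k hk hkA
    exact ⟨i, hi, j, hj, gridStep_add h i j⟩

theorem norm_gridStep_le {h : ℝ} (hh : 0 ≤ h) {k : ℤ × ℤ} (hk : k ∈ neighborSteps) :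
    ‖gridStep h k‖ ≤ h := by
  have hk1 : |k.1| ≤ 1 ∧ |k.2| ≤ 1 := by revert k; decide
  have hnorm : ‖((k.1 : ℝ), (k.2 : ℝ))‖ ≤ 1 :=
    max_le (by simpa using mod_cast hk1.1) (by simpa using mod_cast hk1.2)
  rw [gridStep, norm_smul, Real.norm_of_nonneg hh]
  exact mul_le_of_le_one_right hh hnorm

/-- The sign that selects between `L_h⁻` and `L_h⁺` (with `+1` at `0`). -/
def mixedSign (t : ℝ) : ℝ := if t < 0 then -1 else 1

theorem mixedSign_mul_self (t : ℝ) : mixedSign t * t = |t| := by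
  unfold mixedSign
  split_ifs with ht
  · rw [abs_of_neg ht, neg_one_mul]
  · rw [abs_of_nonneg (not_lt.1 ht), one_mul]

theorem abs_mixedSign (t : ℝ) : |mixedSign t| = 1 := by
  unfold mixedSign
  split_ifs <;> simp

/-- The weights of `h ^ 2 * L_h` at the centre `z`, apart from the zeroth-order term, where `ε` is
the sign of `a₁₂ z`. The value at `h = 0` gives the weights with coefficients frozen at `z`. -/
def sevenPointWeight (a11 a22 a12 : ℝ × ℝ → ℝ) (ε h : ℝ) (z : ℝ × ℝ) (k : ℤ × ℤ) : ℝ :=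
  if k.2 = 0 then a11 (z + h • ((k.1 : ℝ) / 2, 0)) -
    ε / 2 * (a12 (z + h • ((k.1 : ℝ) / 2, 0)) + a12 (z + h • ((k.1 : ℝ), ε * k.1 / 2)))
  else if k.1 = 0 then a22 (z + h • (0, (k.2 : ℝ) / 2)) -
    ε / 2 * (a12 (z + h • (0, (k.2 : ℝ) / 2)) + a12 (z + h • (ε * k.2 / 2, (k.2 : ℝ))))
  else if (k.2 : ℝ) = ε * k.1 then
    ε / 2 * (a12 (z + h • ((k.1 : ℝ) / 2, (k.2 : ℝ))) + a12 (z + h • ((k.1 : ℝ), (k.2 : ℝ) / 2)))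
  else 0

theorem stencilOp_sevenPointWeight_sub (a11 a22 a12 a : ℝ × ℝ → ℝ) {h : ℝ} (hh : h ≠ 0)
    (v : ℝ × ℝ → ℝ) (z : ℝ × ℝ) :
    stencilOp neighborSteps (gridStep h) (sevenPointWeight a11 a22 a12 (mixedSign (a12 z)) h z) v z
      - h ^ 2 * a z * v z = h ^ 2 * Lh a11 a22 a12 a h v z := by
  obtain ⟨x, y⟩ := z
  have hne : (1 : ℝ) ≠ -1 := by norm_num
  rw [stencilOp_apply, sum_neighborSteps, Lh]
  by_cases hsign : a12 (x, y) < 0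
  · rw [if_pos hsign, mixedSign, if_pos hsign]
    simp only [sevenPointWeight, gridStep, Lh0, Lhm, Prod.smul_mk, Prod.mk_add_mk, smul_eq_mul,
      Int.cast_one, Int.cast_neg, Int.cast_zero, reduceIte, one_ne_zero, neg_eq_zero, mul_zero,
      mul_one, mul_neg, neg_mul, neg_neg, zero_mul, add_zero, hne, hne.symm]
    field_simp
    ring_nf
  · rw [if_neg hsign, mixedSign, if_neg hsign]
    simp only [sevenPointWeight, gridStep, Lh0, Lhp, Prod.smul_mk, Prod.mk_add_mk, smul_eq_mul,
      Int.cast_one, Int.cast_neg, Int.cast_zero, reduceIte, one_ne_zero, neg_eq_zero, mul_zero,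
      mul_one, mul_neg, zero_mul, add_zero, hne, hne.symm]
    field_simp
    ring_nf

/-- Coefficients that are `L`-Lipschitz and bounded by `B` on the square, and in which the mixed
coefficient is dominated with margin `c₀`. -/
structure IsDominatedCoeff (a11 a22 a12 : ℝ × ℝ → ℝ) (L : NNReal) (c₀ B : ℝ) : Prop where
  lipschitz11 : LipschitzOnWith L a11 Q2
  lipschitz22 : LipschitzOnWith L a22 Q2
  lipschitz12 : LipschitzOnWith L a12 Q2
  dominated11 : ∀ z ∈ Q2, c₀ + |a12 z| ≤ a11 z
  dominated22 : ∀ z ∈ Q2, c₀ + |a12 z| ≤ a22 z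
  le_bound11 : ∀ z ∈ Q2, a11 z ≤ B
  le_bound22 : ∀ z ∈ Q2, a22 z ≤ B

variable {a11 a22 a12 : ℝ × ℝ → ℝ} {L : NNReal} {c₀ B h : ℝ} {z : ℝ × ℝ}

theorem abs_sample_sub_le {f : ℝ × ℝ → ℝ} (hf : LipschitzOnWith L f Q2)
    (hh : 0 ≤ h) (hz : Metric.closedBall z h ⊆ Q2) {p : ℝ × ℝ} (hp : ‖p‖ ≤ 1) :
    |f (z + h • p) - f z| ≤ L * h := by
  have hnorm : ‖h • p‖ ≤ h := by
    rw [norm_smul, Real.norm_of_nonneg hh]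
    exact mul_le_of_le_one_right hh hp
  have hmem : z + h • p ∈ Metric.closedBall z h := by
    rwa [Metric.mem_closedBall, dist_eq_norm, add_sub_cancel_left]
  calc |f (z + h • p) - f z| ≤ L * dist (z + h • p) z :=
        hf.dist_le_mul _ (hz hmem) _ (hz (Metric.mem_closedBall_self hh))
    _ ≤ L * h := mul_le_mul_of_nonneg_left hmem L.2

theorem abs_sevenPointWeight_sub_le (h11 : LipschitzOnWith L a11 Q2)
    (h22 : LipschitzOnWith L a22 Q2) (h12 : LipschitzOnWith L a12 Q2) (hh : 0 ≤ h)
    (hz : Metric.closedBall z h ⊆ Q2) {ε : ℝ} (hε : |ε| = 1) {k : ℤ × ℤ}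
    (hk : k ∈ neighborSteps) :
    |sevenPointWeight a11 a22 a12 ε h z k - sevenPointWeight a11 a22 a12 ε 0 z k| ≤
      2 * L * h := by
  have hk1 : |(k.1 : ℝ)| ≤ 1 ∧ |(k.2 : ℝ)| ≤ 1 := by
    have : |k.1| ≤ 1 ∧ |k.2| ≤ 1 := by revert k; decide
    exact ⟨mod_cast this.1, mod_cast this.2⟩
  have hhalf : ∀ {t : ℝ}, |t| ≤ 1 → |t / 2| ≤ 1 := fun {t} ht ↦ by
    rw [abs_div, abs_two]; linarith
  have hsign : ∀ {t : ℝ}, |t| ≤ 1 → |ε * t| ≤ 1 := fun ht ↦ by rwa [abs_mul, hε, one_mul]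
  have hmid : ∀ {p q : ℝ × ℝ}, ‖p‖ ≤ 1 → ‖q‖ ≤ 1 →
      |ε / 2 * (a12 (z + h • p) + a12 (z + h • q)) - ε / 2 * (a12 z + a12 z)| ≤ L * h := by
    intro p q hp hq
    have hpq := (abs_add_le _ _).trans
      (add_le_add (abs_sample_sub_le h12 hh hz hp) (abs_sample_sub_le h12 hh hz hq))
    rw [← mul_sub, add_sub_add_comm, abs_mul, abs_div, hε, abs_two]
    linarith
  have hzero : (0 : ℝ) ≤ L * h := by positivity
  have h0 : |(0 : ℝ)| ≤ 1 := by simp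
  have hp : ∀ {s t : ℝ}, |s| ≤ 1 → |t| ≤ 1 → ‖((s, t) : ℝ × ℝ)‖ ≤ 1 := fun hs ht ↦ max_le hs ht
  simp only [sevenPointWeight, zero_smul, add_zero]
  split_ifs
  · have h1 := abs_sample_sub_le h11 hh hz (hp (hhalf hk1.1) h0)
    have h2 := hmid (hp (hhalf hk1.1) h0) (hp hk1.1 (hhalf (hsign hk1.1)))
    rw [sub_sub_sub_comm]
    linarith [abs_sub _ _ |>.trans (add_le_add h1 h2)]
  · have h1 := abs_sample_sub_le h22 hh hz (hp h0 (hhalf hk1.2))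
    have h2 := hmid (hp h0 (hhalf hk1.2)) (hp (hhalf (hsign hk1.2)) hk1.2)
    rw [sub_sub_sub_comm]
    linarith [abs_sub _ _ |>.trans (add_le_add h1 h2)]
  · linarith [hmid (hp (hhalf hk1.1) hk1.2) (hp hk1.1 (hhalf hk1.2))]
  · rw [sub_self, abs_zero]
    linarith

theorem sevenPointWeight_zero (a11 a22 a12 : ℝ × ℝ → ℝ) (ε : ℝ) (z : ℝ × ℝ) (k : ℤ × ℤ) :
    sevenPointWeight a11 a22 a12 ε 0 z k =
      if k.2 = 0 then a11 z - ε * a12 z else if k.1 = 0 then a22 z - ε * a12 z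
      else if (k.2 : ℝ) = ε * k.1 then ε * a12 z else 0 := by
  simp only [sevenPointWeight, zero_smul, add_zero, ← two_mul, ← mul_assoc,
    div_mul_cancel₀ _ (two_ne_zero' ℝ)]

theorem IsDominatedCoeff.isSymmetricPerturbation (hc : IsDominatedCoeff a11 a22 a12 L c₀ B)
    (hc₀ : 0 ≤ c₀) (hh : 0 ≤ h) (hz : Metric.closedBall z h ⊆ Q2) :
    IsSymmetricPerturbation neighborSteps axisSteps c₀ B (2 * L * h)
      (sevenPointWeight a11 a22 a12 (mixedSign (a12 z)) h z)
      (sevenPointWeight a11 a22 a12 (mixedSign (a12 z)) 0 z) := by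
  have hzQ : z ∈ Q2 := hz (Metric.mem_closedBall_self hh)
  have h11 := hc.dominated11 z hzQ
  have h22 := hc.dominated22 z hzQ
  have hB11 := hc.le_bound11 z hzQ
  have hB22 := hc.le_bound22 z hzQ
  have habs := abs_nonneg (a12 z)
  refine ⟨fun k _ ↦ ?_, fun k _ ↦ ?_, fun k _ ↦ ?_, fun k hk ↦ ?_, fun k hk ↦ ?_⟩
  · simp [sevenPointWeight_zero]
  · rw [sevenPointWeight_zero, mixedSign_mul_self]
    split_ifs <;> linarith
  · rw [sevenPointWeight_zero, mixedSign_mul_self]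
    split_ifs <;> linarith
  · have haxis : k.2 = 0 ∨ k.1 = 0 := by revert k; decide
    rw [sevenPointWeight_zero, mixedSign_mul_self]
    split_ifs <;> first | linarith | simp_all
  · exact abs_sevenPointWeight_sub_le hc.lipschitz11 hc.lipschitz22 hc.lipschitz12 hh hz
      (abs_mixedSign _) hk

theorem isCompact_Q2 : IsCompact Q2 := isCompact_Icc

theorem zero_mem_Q2 : (0 : ℝ × ℝ) ∈ Q2 := by
  constructor <;> constructor <;> norm_num

theorem exists_isDominatedCoeff {L₁ L₂ L₃ : NNReal} (h11 : LipschitzOnWith L₁ a11 Q2)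
    (h22 : LipschitzOnWith L₂ a22 Q2) (h12 : LipschitzOnWith L₃ a12 Q2)
    (hdom : ∀ z ∈ Q2, |a12 z| < min (a11 z) (a22 z)) :
    ∃ L c₀ B, 0 < c₀ ∧ IsDominatedCoeff a11 a22 a12 L c₀ B := by
  have hgap : ContinuousOn (fun z ↦ min (a11 z) (a22 z) - |a12 z|) Q2 :=
    (h11.continuousOn.inf h22.continuousOn).sub h12.continuousOn.abs
  obtain ⟨c₀, hc₀, hle⟩ := isCompact_Q2.exists_forall_le' hgap fun z hz ↦ sub_pos.2 (hdom z hz)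
  obtain ⟨B, hB⟩ := isCompact_Q2.bddAbove_image (h11.continuousOn.sup h22.continuousOn)
  have hBz : ∀ z ∈ Q2, max (a11 z) (a22 z) ≤ B := fun z hz ↦ hB (mem_image_of_mem _ hz)
  exact ⟨L₁ ⊔ L₂ ⊔ L₃, c₀, B, hc₀,
    { lipschitz11 := h11.weaken (le_sup_left.trans le_sup_left)
      lipschitz22 := h22.weaken (le_sup_right.trans le_sup_left)
      lipschitz12 := h12.weaken le_sup_right
      dominated11 z hz := by linarith [hle z hz, min_le_left (a11 z) (a22 z)]
      dominated22 z hz := by linarith [hle z hz, min_le_right (a11 z) (a22 z)]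
      le_bound11 z hz := (le_max_left _ _).trans (hBz z hz)
      le_bound22 z hz := (le_max_right _ _).trans (hBz z hz) }⟩

end SevenPointScheme

section LayerFunctions

variable {Γ Γ₁ Γ₂ : Set (ℝ × ℝ)} {K M M₁ M₂ γ γ₁ γ₂ h m : ℝ} {G G₁ G₂ : ℝ × ℝ → ℝ}

/-- A function, depending on the mesh size `h`, that is bounded on the square, Lipschitz and
semiconvex with constant `M`, and whose second difference in some axis direction is of size `γ h`
instead of `h ^ 2` in the layer of width `K h` around `Γ`. -/
structure IsLayerFunction (Γ : Set (ℝ × ℝ)) (K M γ h : ℝ) (G : ℝ × ℝ → ℝ) : Prop where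
  abs_le : ∀ z ∈ Q2, |G z| ≤ M
  abs_sub_le : ∀ z d, |G (z + d) - G z| ≤ M * ‖d‖
  semiconvex : ∀ z d, -(M * ‖d‖ ^ 2) ≤ secondDiff G z d
  gain : ∀ z, ∀ w ∈ Γ, dist z w ≤ K * h →
    ∃ k ∈ axisSteps, γ * h - M * h ^ 2 ≤ secondDiff G z (gridStep h k)

/-- `Γ` has layer functions for all mesh sizes up to `1`, with constants independent of the mesh
size. -/
def HasLayerFunctions (K : ℝ) (Γ : Set (ℝ × ℝ)) : Prop :=
  ∃ M γ, 0 < γ ∧ ∀ h ∈ Ioc (0 : ℝ) 1, ∃ G, IsLayerFunction Γ K M γ h G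

namespace IsLayerFunction

theorem bound_nonneg (hG : IsLayerFunction Γ K M γ h G) : 0 ≤ M :=
  (abs_nonneg _).trans (hG.abs_le 0 zero_mem_Q2)

theorem neg_le_secondDiff_gridStep (hG : IsLayerFunction Γ K M γ h G) (hh : 0 ≤ h) (z : ℝ × ℝ)
    {k : ℤ × ℤ} (hk : k ∈ neighborSteps) : -(M * h ^ 2) ≤ secondDiff G z (gridStep h k) :=
  (neg_le_neg (mul_le_mul_of_nonneg_left
    (pow_le_pow_left₀ (norm_nonneg _) (norm_gridStep_le hh hk) 2) hG.bound_nonneg)).trans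
    (hG.semiconvex z _)

theorem add (h₁ : IsLayerFunction Γ₁ K M₁ γ₁ h G₁) (h₂ : IsLayerFunction Γ₂ K M₂ γ₂ h G₂)
    (hh : 0 ≤ h) :
    IsLayerFunction (Γ₁ ∪ Γ₂) K (M₁ + M₂) (min γ₁ γ₂) h (G₁ + G₂) where
  abs_le z hz := (abs_add_le _ _).trans (add_le_add (h₁.abs_le z hz) (h₂.abs_le z hz))
  abs_sub_le z d := by
    rw [Pi.add_apply, Pi.add_apply, add_sub_add_comm, add_mul]
    exact (abs_add_le _ _).trans (add_le_add (h₁.abs_sub_le z d) (h₂.abs_sub_le z d))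
  semiconvex z d := by
    rw [secondDiff_add]
    linarith [h₁.semiconvex z d, h₂.semiconvex z d]
  gain z w hw hzw := by
    have hsub := (isGeneratedStencil_neighborSteps h).subset
    rcases hw with hw | hw
    · obtain ⟨k, hk, hgain⟩ := h₁.gain z w hw hzw
      refine ⟨k, hk, ?_⟩
      rw [secondDiff_add]
      linarith [h₂.neg_le_secondDiff_gridStep hh z (hsub hk),
        mul_le_mul_of_nonneg_right (min_le_left γ₁ γ₂) hh]
    · obtain ⟨k, hk, hgain⟩ := h₂.gain z w hw hzw
      refine ⟨k, hk, ?_⟩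
      rw [secondDiff_add]
      linarith [h₁.neg_le_secondDiff_gridStep hh z (hsub hk),
        mul_le_mul_of_nonneg_right (min_le_right γ₁ γ₂) hh]

end IsLayerFunction

namespace HasLayerFunctions

theorem mono (hΓ : HasLayerFunctions K Γ₂) (hsub : Γ₁ ⊆ Γ₂) : HasLayerFunctions K Γ₁ := by
  obtain ⟨M, γ, hγ, hG⟩ := hΓ
  refine ⟨M, γ, hγ, fun h hh ↦ ?_⟩
  obtain ⟨G, hG⟩ := hG h hh
  exact ⟨G, { hG with gain := fun z w hw ↦ hG.gain z w (hsub hw) }⟩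

theorem empty (K : ℝ) : HasLayerFunctions K ∅ :=
  ⟨0, 1, one_pos, fun _ _ ↦ ⟨0, by constructor <;> simp [secondDiff]⟩⟩

theorem union (h₁ : HasLayerFunctions K Γ₁) (h₂ : HasLayerFunctions K Γ₂) :
    HasLayerFunctions K (Γ₁ ∪ Γ₂) := by
  obtain ⟨M₁, γ₁, hγ₁, hG₁⟩ := h₁
  obtain ⟨M₂, γ₂, hγ₂, hG₂⟩ := h₂
  refine ⟨M₁ + M₂, min γ₁ γ₂, lt_min hγ₁ hγ₂, fun h hh ↦ ?_⟩
  obtain ⟨G₁, hG₁⟩ := hG₁ h hh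
  obtain ⟨G₂, hG₂⟩ := hG₂ h hh
  exact ⟨G₁ + G₂, hG₁.add hG₂ hh.1.le⟩

end HasLayerFunctions

/-- The smooth approximation `√(s ^ 2 + m ^ 2)` of `|s|` at scale `m`, written as the modulus of
`s + m * I`. -/
def softAbs (m s : ℝ) : ℝ := ‖(s + m * Complex.I : ℂ)‖

theorem softAbs_nonneg (m s : ℝ) : 0 ≤ softAbs m s := norm_nonneg _

theorem sq_softAbs (m s : ℝ) : softAbs m s ^ 2 = s ^ 2 + m ^ 2 := by
  rw [softAbs, Complex.sq_norm, Complex.normSq_add_mul_I]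

theorem softAbs_le (m s : ℝ) : softAbs m s ≤ |s| + |m| := by
  simpa [softAbs] using norm_add_le (s : ℂ) (m * Complex.I)

theorem abs_softAbs_sub_le (m s t : ℝ) : |softAbs m s - softAbs m t| ≤ |s - t| := by
  refine (abs_norm_sub_norm_le _ _).trans_eq ?_
  rw [add_sub_add_right_eq_sub, ← Complex.ofReal_sub, Complex.norm_real, Real.norm_eq_abs]

theorem two_mul_softAbs_le (m s t u : ℝ) :
    2 * softAbs m u ≤ softAbs m s + softAbs m t + |s + t - 2 * u| := by
  have hsplit : 2 * (u + m * Complex.I : ℂ) =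
      (s + m * Complex.I) + (t + m * Complex.I) - ((s + t - 2 * u : ℝ) : ℂ) := by
    push_cast
    ring
  calc 2 * softAbs m u = ‖2 * (u + m * Complex.I : ℂ)‖ := by rw [softAbs, norm_mul]; simp
    _ ≤ softAbs m s + softAbs m t + |s + t - 2 * u| := by
      rw [hsplit]
      refine (norm_sub_le _ _).trans (add_le_add (norm_add_le _ _) ?_)
      rw [Complex.norm_real, Real.norm_eq_abs]

theorem sq_softAbs_add_sub_softAbs_sub_le {s : ℝ} (hm : 0 < m) (hs : |s| ≤ m) (h : ℝ) :
    (softAbs m (s + h) - softAbs m (s - h)) ^ 2 ≤ 2 * h ^ 2 := by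
  set a := softAbs m (s + h) with ha
  set b := softAbs m (s - h) with hb
  set c := softAbs m s
  have hs2 : s ^ 2 ≤ m ^ 2 := sq_le_sq' (neg_le_of_abs_le hs) (le_of_abs_le hs)
  have hcentre : c ^ 2 = s ^ 2 + m ^ 2 := sq_softAbs m s
  have hprod : (a - b) ^ 2 * (a + b) ^ 2 = 16 * (s ^ 2 * h ^ 2) := by
    rw [← mul_pow, mul_comm, ← sq_sub_sq, ha, hb, sq_softAbs, sq_softAbs]
    ring
  have hsum : (2 * c) ^ 2 ≤ (a + b) ^ 2 := by
    refine pow_le_pow_left₀ (mul_nonneg two_pos.le (softAbs_nonneg m s)) ?_ 2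
    have hmid := two_mul_softAbs_le m (s + h) (s - h) s
    rwa [show s + h + (s - h) - 2 * s = 0 by ring, abs_zero, add_zero] at hmid
  refine le_of_mul_le_mul_right ?_ (show 0 < c ^ 2 by rw [hcentre]; positivity)
  nlinarith [mul_le_mul_of_nonneg_left hsum (sq_nonneg (a - b)),
    mul_le_mul_of_nonneg_right hs2 (sq_nonneg h)]

-- By the parallelogram law `(a + b) ^ 2 + (a - b) ^ 2 = 4 * c ^ 2 + 4 * h ^ 2` for the values `a`,
-- `b`, `c` of `softAbs m` at `s + h`, `s - h`, `s`, so an upper bound for `a - b` bounds `a + b`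
-- from below.
theorem le_secondDiff_softAbs {s : ℝ} (hs : |s| ≤ m) (hh : 0 < h) (hhm : h ≤ m) :
    h ^ 2 / (4 * m) ≤ secondDiff (softAbs m) s h := by
  have hm : 0 < m := hh.trans_le hhm
  have hs2 : s ^ 2 ≤ m ^ 2 := sq_le_sq' (neg_le_of_abs_le hs) (le_of_abs_le hs)
  have hdiff := sq_softAbs_add_sub_softAbs_sub_le hm hs h
  have hplus := sq_softAbs m (s + h)
  have hminus := sq_softAbs m (s - h)
  have hcentre := sq_softAbs m s
  have ha0 := softAbs_nonneg m (s + h)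
  have hb0 := softAbs_nonneg m (s - h)
  have hc0 := softAbs_nonneg m s
  unfold secondDiff
  set a := softAbs m (s + h)
  set b := softAbs m (s - h)
  set c := softAbs m s
  have hcm : c ≤ 3 / 2 * m := by nlinarith
  set q := h ^ 2 / (4 * m) with hq
  have hqm : 4 * (q * m) = h ^ 2 := by rw [hq]; field_simp
  have hq0 : 0 ≤ q := by positivity
  have hqh : 4 * q ≤ h := by nlinarith
  have hsq : (q + 2 * c) ^ 2 ≤ (a + b) ^ 2 := by
    nlinarith [mul_le_mul_of_nonneg_left hcm hq0, mul_le_mul hqh hqh (by positivity) hh.le]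
  linarith [le_of_sq_le_sq hsq (by linarith)]

/-- A function vanishing on `Γ` that is Lipschitz, has second differences of second order and
has slope one along some axis direction. -/
structure IsDefiningFunction (Γ : Set (ℝ × ℝ)) (P Q : NNReal) (d : ℝ × ℝ → ℝ) : Prop where
  eq_zero : ∀ z ∈ Γ, d z = 0
  abs_sub_le : ∀ z v, |d (z + v) - d z| ≤ P * ‖v‖
  abs_secondDiff_le : ∀ z v, |secondDiff d z v| ≤ Q * ‖v‖ ^ 2
  exists_slope_one : ∃ k ∈ axisSteps, ∀ h z, d (z + gridStep h k) = d z + h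

namespace IsDefiningFunction

variable {P Q : NNReal} {d : ℝ × ℝ → ℝ}

theorem isLayerFunction (hd : IsDefiningFunction Γ P Q d) (hK : 0 ≤ K)
    (hh : h ∈ Ioc (0 : ℝ) 1) :
    IsLayerFunction Γ K (|d 0| + P + (P * K + 1) + Q) (1 / (4 * (P * K + 1))) h
      (fun z ↦ softAbs ((P * K + 1) * h) (d z)) := by
  have hP : (0 : ℝ) ≤ P := P.2
  have := NNReal.coe_nonneg Q
  have hPK : 0 ≤ P * K := mul_nonneg hP hK
  obtain ⟨hh0, hh1⟩ := hh
  have hd0 := abs_nonneg (d 0)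
  refine ⟨fun z hz ↦ ?_, fun z v ↦ ?_, fun z v ↦ ?_, fun z w hw hzw ↦ ?_⟩
  · have hnorm : ‖z‖ ≤ 1 := max_le (abs_le.2 ⟨hz.1.1, hz.2.1⟩) (abs_le.2 ⟨hz.1.2, hz.2.2⟩)
    have hdz : |d z| ≤ |d 0| + P := by
      have := hd.abs_sub_le 0 z
      rw [zero_add] at this
      linarith [abs_sub_abs_le_abs_sub (d z) (d 0), mul_le_of_le_one_right hP hnorm]
    have hm : |(P * K + 1) * h| ≤ P * K + 1 := by
      rw [abs_of_nonneg (by positivity)]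
      exact mul_le_of_le_one_right (by positivity) hh1
    rw [abs_of_nonneg (softAbs_nonneg _ _)]
    linarith [softAbs_le ((P * K + 1) * h) (d z)]
  · refine ((abs_softAbs_sub_le _ _ _).trans (hd.abs_sub_le z v)).trans ?_
    exact mul_le_mul_of_nonneg_right (by linarith) (norm_nonneg v)
  · have hsemi := two_mul_softAbs_le ((P * K + 1) * h) (d (z + v)) (d (z - v)) (d z)
    have hQv := hd.abs_secondDiff_le z v
    have hle : Q * ‖v‖ ^ 2 ≤ (|d 0| + P + (P * K + 1) + Q) * ‖v‖ ^ 2 :=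
      mul_le_mul_of_nonneg_right (by linarith) (sq_nonneg _)
    simp only [secondDiff] at hQv ⊢
    linarith
  · obtain ⟨k, hk, hslope⟩ := hd.exists_slope_one
    have hminus : d (z - gridStep h k) = d z - h := by
      rw [eq_sub_iff_add_eq, ← hslope, sub_add_cancel]
    have hdz : |d z| ≤ (P * K + 1) * h := by
      have := hd.abs_sub_le w (z - w)
      rw [add_sub_cancel, hd.eq_zero w hw, sub_zero, ← dist_eq_norm] at this
      nlinarith
    have hgain := le_secondDiff_softAbs hdz hh0 (by nlinarith)
    refine ⟨k, hk, ?_⟩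
    have hγ : 1 / (4 * (P * K + 1)) * h = h ^ 2 / (4 * ((P * K + 1) * h)) := by field_simp
    have hM : 0 ≤ (|d 0| + P + (P * K + 1) + Q) * h ^ 2 := by positivity
    simp only [secondDiff, hslope, hminus] at hgain ⊢
    linarith

theorem hasLayerFunctions (hd : IsDefiningFunction Γ P Q d) (hK : 0 ≤ K) :
    HasLayerFunctions K Γ :=
  ⟨_, _, by positivity, fun _ hh ↦ ⟨_, hd.isLayerFunction hK hh⟩⟩

end IsDefiningFunction

theorem abs_secondDiff_le_of_lipschitzWith_deriv {g : ℝ → ℝ} {Q : NNReal}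
    (hg : Differentiable ℝ g) (hQ : LipschitzWith Q (deriv g)) (u s : ℝ) :
    |secondDiff g u s| ≤ 2 * Q * s ^ 2 := by
  have hderiv : ∀ t, HasDerivAt (fun t ↦ g (u + t) + g (u - t))
      (deriv g (u + t) - deriv g (u - t)) t := fun t ↦ by
    rw [sub_eq_add_neg (deriv g (u + t))]
    exact ((hg (u + t)).hasDerivAt.comp_const_add u t).add
      ((hg (u - t)).hasDerivAt.comp_const_sub u t)
  have hbound : ∀ t ∈ Metric.closedBall (0 : ℝ) |s|,
      ‖deriv g (u + t) - deriv g (u - t)‖ ≤ 2 * Q * |s| := fun t ht ↦ by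
    have hts : |t| ≤ |s| := by simpa using ht
    have hlip := hQ.dist_le_mul (u + t) (u - t)
    rw [dist_eq_norm, Real.dist_eq, show u + t - (u - t) = 2 * t by ring, abs_mul, abs_two] at hlip
    nlinarith [mul_le_mul_of_nonneg_left hts Q.2]
  have hmean := (convex_closedBall (0 : ℝ) |s|).norm_image_sub_le_of_norm_hasDerivWithin_le
    (fun t _ ↦ (hderiv t).hasDerivWithinAt) hbound (Metric.mem_closedBall_self (abs_nonneg s))
    (show s ∈ Metric.closedBall (0 : ℝ) |s| by simp)
  rw [add_zero, sub_zero, sub_zero, Real.norm_eq_abs, Real.norm_eq_abs, mul_assoc (2 * (Q : ℝ)),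
    abs_mul_abs_self, ← sq, ← two_mul] at hmean
  exact hmean

theorem isDefiningFunction_graph {g : ℝ → ℝ} {P Q : NNReal} {ℓ ℓ' : ℝ × ℝ →L[ℝ] ℝ}
    (hg : Differentiable ℝ g) (hP : LipschitzWith P g) (hQ : LipschitzWith Q (deriv g))
    (hℓ : ∀ v, |ℓ v| ≤ ‖v‖) (hℓ' : ∀ v, |ℓ' v| ≤ ‖v‖)
    (haxis : ∃ k ∈ axisSteps, ∀ h, ℓ (gridStep h k) = h ∧ ℓ' (gridStep h k) = 0)
    (hΓ : ∀ z ∈ Γ, g (ℓ' z) = ℓ z) :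
    IsDefiningFunction Γ (1 + P) (2 * Q) (fun z ↦ ℓ z - g (ℓ' z)) where
  eq_zero z hz := sub_eq_zero.2 (hΓ z hz).symm
  abs_sub_le z v := by
    have hgP := hP.dist_le_mul (ℓ' z + ℓ' v) (ℓ' z)
    rw [dist_eq_norm, Real.dist_eq, add_sub_cancel_left] at hgP
    rw [map_add, map_add, sub_sub_sub_comm, add_sub_cancel_left]
    refine (abs_sub _ _).trans ?_
    rw [NNReal.coe_add, NNReal.coe_one, add_mul, one_mul]
    exact add_le_add (hℓ v) (hgP.trans (mul_le_mul_of_nonneg_left (hℓ' v) P.2))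
  abs_secondDiff_le z v := by
    have hsplit : secondDiff (fun z ↦ ℓ z - g (ℓ' z)) z v = -secondDiff g (ℓ' z) (ℓ' v) := by
      simp only [secondDiff, map_add, map_sub]
      ring
    rw [hsplit, abs_neg]
    refine (abs_secondDiff_le_of_lipschitzWith_deriv hg hQ _ _).trans ?_
    rw [← sq_abs]
    exact mul_le_mul_of_nonneg_left (pow_le_pow_left₀ (abs_nonneg _) (hℓ' v) 2) (by positivity)
  exists_slope_one := by
    obtain ⟨k, hk, hstep⟩ := haxis
    refine ⟨k, hk, fun h z ↦ ?_⟩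
    rw [map_add, map_add, (hstep h).1, (hstep h).2, add_zero, add_sub_right_comm]

theorem exists_lipschitzWith_factor {α β : Type*} [Nonempty α] [PseudoMetricSpace β] {s : Set α}
    {X : α → β} {q : α → ℝ} {C M : NNReal}
    (hq : ∀ t ∈ s, ∀ u ∈ s, |q t - q u| ≤ C * dist (X t) (X u)) (hM : ∀ t ∈ s, |q t| ≤ M) :
    ∃ p : β → ℝ, LipschitzWith C p ∧ (∀ y, |p y| ≤ M) ∧ ∀ t ∈ s, p (X t) = q t := by
  have hinv : ∀ y ∈ X '' s, Function.invFunOn X s y ∈ s ∧ X (Function.invFunOn X s y) = y :=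
    fun y hy ↦ Function.invFunOn_pos hy
  have hlip : LipschitzOnWith C (q ∘ Function.invFunOn X s) (X '' s) := by
    refine LipschitzOnWith.of_dist_le_mul fun y hy z hz ↦ ?_
    simpa only [Function.comp_apply, Real.dist_eq, (hinv y hy).2, (hinv z hz).2] using
      hq _ (hinv y hy).1 _ (hinv z hz).1
  obtain ⟨f, hf, hfeq⟩ := hlip.extend_real
  refine ⟨fun y ↦ max (-M : ℝ) (min (f y) M), (hf.min_const M).const_max (-M), fun y ↦ ?_,
    fun t ht ↦ ?_⟩
  · exact abs_le.2 ⟨le_max_left _ _, max_le (neg_le_self M.2) (min_le_right _ _)⟩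
  · have hXt : X t ∈ X '' s := mem_image_of_mem X ht
    have hfq : f (X t) = q t := by
      refine (hfeq hXt).symm.trans (sub_eq_zero.1 (abs_nonpos_iff.1 ?_))
      simpa [(hinv _ hXt).2] using hq _ (hinv _ hXt).1 t ht
    simp only [hfq, min_eq_left (abs_le.1 (hM t ht)).2, max_eq_right (abs_le.1 (hM t ht)).1]

theorem mul_dist_le_of_abs_deriv_sub_le {s : Set ℝ} {X X' : ℝ → ℝ} {m₀ c : ℝ} (hs : Convex ℝ s)
    (hX : ∀ t ∈ s, HasDerivWithinAt X (X' t) s t) (hslope : ∀ t ∈ s, |X' t - m₀| ≤ c) {t u : ℝ}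
    (ht : t ∈ s) (hu : u ∈ s) : (|m₀| - c) * dist t u ≤ dist (X t) (X u) := by
  have hmean := hs.norm_image_sub_le_of_norm_hasDerivWithin_le
    (f := fun t ↦ X t - m₀ * t) (f' := fun t ↦ X' t - m₀)
    (fun t ht ↦ (hX t ht).sub (by simpa using (hasDerivWithinAt_id t s).const_mul m₀)) hslope hu ht
  rw [Real.norm_eq_abs, Real.norm_eq_abs, sub_sub_sub_comm, ← mul_sub] at hmean
  rw [Real.dist_eq, Real.dist_eq, sub_mul, ← abs_mul]
  linarith [abs_sub_abs_le_abs_sub (m₀ * (t - u)) (X t - X u),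
    abs_sub_comm (m₀ * (t - u)) (X t - X u)]

theorem exists_slope_of_deriv_near {s : Set ℝ} {X X' Y' : ℝ → ℝ} {m₀ : ℝ} (hs : Convex ℝ s)
    (hsc : IsCompact s) (hX : ∀ t ∈ s, HasDerivWithinAt X (X' t) s t) (hX' : ContDiffOn ℝ 1 X' s)
    (hY' : ContDiffOn ℝ 1 Y' s) (hm₀ : m₀ ≠ 0) (hslope : ∀ t ∈ s, |X' t - m₀| ≤ |m₀| / 2) :
    ∃ (p : ℝ → ℝ) (P Q : NNReal), LipschitzWith Q p ∧ (∀ y, |p y| ≤ P) ∧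
      ∀ t ∈ s, p (X t) * X' t = Y' t := by
  have hm₀' : 0 < |m₀| := abs_pos.2 hm₀
  have hX'0 : ∀ t ∈ s, X' t ≠ 0 := fun t ht h0 ↦ by
    have := hslope t ht
    rw [h0, zero_sub, abs_neg] at this
    linarith
  have hquot : ContDiffOn ℝ 1 (Y' / X') s := hY'.div hX' hX'0
  obtain ⟨C, hC⟩ := hquot.exists_lipschitzOnWith one_ne_zero hs hsc
  obtain ⟨M, hM⟩ := hsc.exists_bound_of_continuousOn hquot.continuousOn
  have hfactor : ∀ t ∈ s, ∀ u ∈ s,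
      |(Y' / X') t - (Y' / X') u| ≤ (C * (2 / ‖m₀‖₊) : NNReal) * dist (X t) (X u) := by
    intro t ht u hu
    have hle : dist t u ≤ 2 / |m₀| * dist (X t) (X u) := by
      rw [div_mul_eq_mul_div, le_div_iff₀ hm₀']
      linarith [mul_dist_le_of_abs_deriv_sub_le hs hX hslope ht hu]
    calc |(Y' / X') t - (Y' / X') u| ≤ C * dist t u := hC.dist_le_mul t ht u hu
      _ ≤ C * (2 / |m₀| * dist (X t) (X u)) := mul_le_mul_of_nonneg_left hle C.2
      _ = (C * (2 / ‖m₀‖₊) : NNReal) * dist (X t) (X u) := by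
        push_cast
        rw [mul_assoc, Real.norm_eq_abs]
  obtain ⟨p, hp, hpM, hpX⟩ := exists_lipschitzWith_factor hfactor (M := M.toNNReal)
    fun t ht ↦ (hM t ht).trans M.le_coe_toNNReal
  exact ⟨p, _, _, hp, hpM, fun t ht ↦ by
    rw [hpX t ht, Pi.div_apply, div_mul_cancel₀ _ (hX'0 t ht)]⟩

theorem exists_primitive_of_abs_le {p : ℝ → ℝ} {P : NNReal} (hp : Continuous p)
    (hP : ∀ y, |p y| ≤ P) (x₀ y₀ : ℝ) :
    ∃ g : ℝ → ℝ, Differentiable ℝ g ∧ LipschitzWith P g ∧ deriv g = p ∧ g x₀ = y₀ := by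
  have hderiv : ∀ u, HasDerivAt (fun u ↦ y₀ + ∫ τ in x₀..u, p τ) (p u) u := fun u ↦
    (hp.integral_hasStrictDerivAt x₀ u).hasDerivAt.const_add y₀
  have hdiff : Differentiable ℝ fun u ↦ y₀ + ∫ τ in x₀..u, p τ := fun u ↦
    (hderiv u).differentiableAt
  exact ⟨_, hdiff, lipschitzWith_of_nnnorm_deriv_le hdiff fun u ↦ by
    rw [(hderiv u).deriv]
    exact hP u, funext fun u ↦ (hderiv u).deriv, by simp⟩

theorem exists_graph_of_deriv_near {s : Set ℝ} {X Y X' Y' : ℝ → ℝ} {m₀ : ℝ} (hs : Convex ℝ s)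
    (hsc : IsCompact s) (hX : ∀ t ∈ s, HasDerivWithinAt X (X' t) s t)
    (hY : ∀ t ∈ s, HasDerivWithinAt Y (Y' t) s t) (hX' : ContDiffOn ℝ 1 X' s)
    (hY' : ContDiffOn ℝ 1 Y' s) (hm₀ : m₀ ≠ 0) (hslope : ∀ t ∈ s, |X' t - m₀| ≤ |m₀| / 2)
    {t₀ : ℝ} (ht₀ : t₀ ∈ s) :
    ∃ (g : ℝ → ℝ) (P Q : NNReal), Differentiable ℝ g ∧ LipschitzWith P g ∧
      LipschitzWith Q (deriv g) ∧ ∀ t ∈ s, g (X t) = Y t := by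
  obtain ⟨p, P, Q, hp, hP, hpX⟩ := exists_slope_of_deriv_near hs hsc hX hX' hY' hm₀ hslope
  obtain ⟨g, hg, hgP, hgp, hg₀⟩ := exists_primitive_of_abs_le hp.continuous hP (X t₀) (Y t₀)
  refine ⟨g, P, Q, hg, hgP, hgp ▸ hp, fun t ht ↦ ?_⟩
  have hconst : ∀ t ∈ s, HasDerivWithinAt (fun t ↦ g (X t) - Y t) 0 s t := fun t ht ↦ by
    have hcomp := (hg (X t)).hasDerivAt.comp_hasDerivWithinAt t (hX t ht)
    rw [hgp, hpX t ht] at hcomp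
    exact (sub_self (Y' t)) ▸ hcomp.sub (hY t ht)
  have hmean := hs.norm_image_sub_le_of_norm_hasDerivWithin_le hconst
    (fun t _ ↦ norm_zero.le) ht₀ ht
  rw [zero_mul, hg₀, sub_self, sub_zero] at hmean
  exact sub_eq_zero.1 (norm_le_zero_iff.1 hmean)

theorem exists_hasLayerFunctions_image {r : ℝ → ℝ × ℝ} (hr : ContDiffOn ℝ 2 r (Icc 0 1))
    {ℓ ℓ' : ℝ × ℝ →L[ℝ] ℝ} (hℓ : ∀ v, |ℓ v| ≤ ‖v‖) (hℓ' : ∀ v, |ℓ' v| ≤ ‖v‖)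
    (haxis : ∃ k ∈ axisSteps, ∀ h, ℓ (gridStep h k) = h ∧ ℓ' (gridStep h k) = 0)
    (hK : 0 ≤ K) {t₀ : ℝ} (ht₀ : t₀ ∈ Icc (0 : ℝ) 1)
    (hslope : ℓ' (derivWithin r (Icc 0 1) t₀) ≠ 0) :
    ∃ s ∈ nhdsWithin t₀ (Icc 0 1), HasLayerFunctions K (r '' s) := by
  set r' := derivWithin r (Icc 0 1)
  have hr' : ContDiffOn ℝ 1 r' (Icc 0 1) :=
    hr.derivWithin (uniqueDiffOn_Icc zero_lt_one) (by norm_num)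
  have hderiv : ∀ t ∈ Icc (0 : ℝ) 1, HasDerivWithinAt r (r' t) (Icc 0 1) t := fun t ht ↦
    (hr.differentiableOn two_ne_zero t ht).hasDerivWithinAt
  have hcomp : ∀ φ : ℝ × ℝ →L[ℝ] ℝ, ContDiffOn ℝ 1 (φ ∘ r') (Icc 0 1) := fun φ ↦
    φ.contDiff.comp_contDiffOn hr'
  obtain ⟨δ, hδ, hnear⟩ := Metric.continuousWithinAt_iff.1 ((hcomp ℓ').continuousOn t₀ ht₀)
    (|ℓ' (r' t₀)| / 2) (half_pos (abs_pos.2 hslope))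
  set s := Icc (0 : ℝ) 1 ∩ Metric.closedBall t₀ (δ / 2)
  have hsub : s ⊆ Icc 0 1 := inter_subset_left
  have hcomp_deriv : ∀ φ : ℝ × ℝ →L[ℝ] ℝ, ∀ t ∈ s,
      HasDerivWithinAt (φ ∘ r) ((φ ∘ r') t) s t := fun φ t ht ↦
    φ.hasFDerivAt.comp_hasDerivWithinAt t ((hderiv t (hsub ht)).mono hsub)
  obtain ⟨g, P, Q, hg, hP, hQ, hgraph⟩ := exists_graph_of_deriv_near
    ((convex_Icc 0 1).inter (convex_closedBall t₀ (δ / 2)))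
    (isCompact_Icc.inter_right Metric.isClosed_closedBall) (hcomp_deriv ℓ') (hcomp_deriv ℓ)
    ((hcomp ℓ').mono hsub) ((hcomp ℓ).mono hsub) hslope
    (fun t ht ↦ (hnear ht.1 ((Metric.mem_closedBall.1 ht.2).trans_lt (half_lt_self hδ))).le)
    (t₀ := t₀) ⟨ht₀, Metric.mem_closedBall_self (half_pos hδ).le⟩
  exact ⟨s, inter_mem_nhdsWithin _ (Metric.closedBall_mem_nhds _ (half_pos hδ)),
    (isDefiningFunction_graph hg hP hQ hℓ hℓ' haxis (forall_mem_image.2 hgraph)).hasLayerFunctions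
      hK⟩

theorem hasLayerFunctions_image_of_derivWithin_ne_zero {r : ℝ → ℝ × ℝ}
    (hr : ContDiffOn ℝ 2 r (Icc 0 1)) (hrreg : ∀ t ∈ Icc (0 : ℝ) 1, derivWithin r (Icc 0 1) t ≠ 0)
    (hK : 0 ≤ K) : HasLayerFunctions K (r '' Icc 0 1) := by
  have hfst : ∀ v : ℝ × ℝ, |ContinuousLinearMap.fst ℝ ℝ ℝ v| ≤ ‖v‖ := norm_fst_le
  have hsnd : ∀ v : ℝ × ℝ, |ContinuousLinearMap.snd ℝ ℝ ℝ v| ≤ ‖v‖ := norm_snd_le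
  refine isCompact_Icc.induction_on (p := fun s ↦ HasLayerFunctions K (r '' s)) ?_
    (fun s t hst ht ↦ ht.mono (image_mono hst)) (fun s t hs ht ↦ ?_) fun t ht ↦ ?_
  · rw [image_empty]
    exact HasLayerFunctions.empty K
  · rw [image_union]
    exact hs.union ht
  · by_cases hslope : (derivWithin r (Icc 0 1) t).1 = 0
    · have hslope' : (derivWithin r (Icc 0 1) t).2 ≠ 0 := fun h ↦
        hrreg t ht (Prod.ext hslope h)
      exact exists_hasLayerFunctions_image hr hfst hsnd
        ⟨(1, 0), by simp [axisSteps], by simp [gridStep]⟩ hK ht hslope'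
    · exact exists_hasLayerFunctions_image hr hsnd hfst
        ⟨(0, 1), by simp [axisSteps], by simp [gridStep]⟩ hK ht hslope

end LayerFunctions

section Barrier

variable {Γ : Set (ℝ × ℝ)} {K M γ L c₀ B h μ : ℝ} {c w : ℤ × ℤ → ℝ} {G : ℝ × ℝ → ℝ} {z : ℝ × ℝ}

theorem neg_mem_neighborSteps : ∀ k ∈ neighborSteps, -k ∈ neighborSteps := by decide

theorem secondDiff_exp (μ : ℝ) (z d : ℝ × ℝ) :
    secondDiff (fun z ↦ Real.exp (μ * (z.1 + 1))) z d =
      Real.exp (μ * (z.1 + 1)) * (2 * Real.sinh (μ * d.1 / 2)) ^ 2 := by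
  have hplus : μ * ((z + d).1 + 1) = μ * (z.1 + 1) + (μ * d.1 / 2 + μ * d.1 / 2) := by
    rw [Prod.fst_add]; ring
  have hminus : μ * ((z - d).1 + 1) = μ * (z.1 + 1) + (-(μ * d.1 / 2) + -(μ * d.1 / 2)) := by
    rw [Prod.fst_sub]; ring
  have hinv : Real.exp (μ * d.1 / 2) * Real.exp (-(μ * d.1 / 2)) = 1 := by
    rw [← Real.exp_add, add_neg_cancel, Real.exp_zero]
  simp only [secondDiff, hplus, hminus, Real.exp_add, Real.sinh_eq]
  linear_combination 2 * Real.exp (μ * (z.1 + 1)) * hinv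

theorem abs_exp_add_sub_le {d : ℝ × ℝ} (hμ : 0 ≤ μ) (hd : ‖d‖ ≤ h) (hμh : μ * h ≤ 1) :
    |Real.exp (μ * ((z + d).1 + 1)) - Real.exp (μ * (z.1 + 1))| ≤
      Real.exp (μ * (z.1 + 1)) * (2 * (μ * h)) := by
  have hstep : |μ * d.1| ≤ μ * h := by
    rw [abs_mul, abs_of_nonneg hμ]
    exact mul_le_mul_of_nonneg_left ((norm_fst_le d).trans hd) hμ
  rw [Prod.fst_add, add_right_comm, mul_add, Real.exp_add, ← mul_sub_one, abs_mul, Real.abs_exp]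
  refine mul_le_mul_of_nonneg_left ?_ (Real.exp_pos _).le
  exact (Real.abs_exp_sub_one_le (hstep.trans hμh)).trans
    (mul_le_mul_of_nonneg_left hstep two_pos.le)

theorem sq_le_stencilOp_exp
    (hc : IsSymmetricPerturbation neighborSteps axisSteps c₀ B (2 * L * h) c w) (hc₀ : 0 ≤ c₀)
    (hh : 0 ≤ h) (hμ : 1 ≤ μ) (hμL : 32 * L + 1 ≤ c₀ / 2 * μ) (hμh : μ * h ≤ 1) (hz : -1 ≤ z.1) :
    h ^ 2 ≤ stencilOp neighborSteps (gridStep h) c (fun z ↦ Real.exp (μ * (z.1 + 1))) z := by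
  have hμ0 : 0 ≤ μ := zero_le_one.trans hμ
  set v : ℝ × ℝ → ℝ := fun z ↦ Real.exp (μ * (z.1 + 1))
  have hv1 : 1 ≤ v z := Real.one_le_exp (mul_nonneg hμ0 (by linarith))
  have hlower := hc.le_stencilOp (v := v) (x := z) (P := v z * (2 * (μ * h)))
    neg_mem_neighborSteps (isGeneratedStencil_neighborSteps h).subset (gridStep_neg h) le_rfl
    (fun k _ ↦ by rw [secondDiff_exp, neg_zero]; positivity)
    (fun k hk ↦ abs_exp_add_sub_le hμ0 (norm_gridStep_le hh hk) hμh)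
    (k₀ := (1, 0)) (by decide)
  have hsinh : (μ * h) ^ 2 ≤ (2 * Real.sinh (μ * (gridStep h (1, 0)).1 / 2)) ^ 2 := by
    have hstep : (gridStep h (1, 0)).1 = h := by simp [gridStep]
    refine pow_le_pow_left₀ (by positivity) ?_ 2
    rw [hstep]
    linarith [Real.self_le_sinh_iff.2 (show 0 ≤ μ * h / 2 by positivity)]
  rw [secondDiff_exp, mul_zero, zero_add, add_zero,
    show (neighborSteps.card : ℝ) = 8 by norm_num [neighborSteps]] at hlower
  have hvh : h ^ 2 ≤ v z * μ * h ^ 2 :=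
    le_mul_of_one_le_left (sq_nonneg h) (one_le_mul_of_one_le_of_one_le hv1 hμ)
  calc h ^ 2 ≤ (c₀ / 2 * μ - 32 * L) * (v z * μ * h ^ 2) :=
        hvh.trans (le_mul_of_one_le_left ((sq_nonneg h).trans hvh) (by linarith))
    _ = c₀ / 2 * (v z * (μ * h) ^ 2) - 8 * (2 * L * h * (v z * (2 * (μ * h)))) := by ring
    _ ≤ c₀ / 2 * (v z * (2 * Real.sinh (μ * (gridStep h (1, 0)).1 / 2)) ^ 2) -
        8 * (2 * L * h * (v z * (2 * (μ * h)))) := by gcongr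
    _ ≤ _ := hlower

theorem IsLayerFunction.le_stencilOp (hG : IsLayerFunction Γ K M γ h G)
    (hc : IsSymmetricPerturbation neighborSteps axisSteps c₀ B (2 * L * h) c w) (hh : 0 ≤ h)
    {k : ℤ × ℤ} (hk : k ∈ axisSteps) :
    c₀ / 2 * (secondDiff G z (gridStep h k) + M * h ^ 2) - (4 * B + 16 * L) * M * h ^ 2 ≤
      stencilOp neighborSteps (gridStep h) c G z := by
  have hlower := hc.le_stencilOp (v := G) (x := z) (q := M * h ^ 2) (P := M * h)
    neg_mem_neighborSteps (isGeneratedStencil_neighborSteps h).subset (gridStep_neg h)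
    (mul_nonneg hG.bound_nonneg (sq_nonneg h))
    (fun k hk ↦ hG.neg_le_secondDiff_gridStep hh z hk)
    (fun k hk ↦ (hG.abs_sub_le z _).trans
      (mul_le_mul_of_nonneg_left (norm_gridStep_le hh hk) hG.bound_nonneg)) hk
  rw [show (neighborSteps.card : ℝ) = 8 by norm_num [neighborSteps]] at hlower
  linarith

theorem IsLayerFunction.sq_add_le_stencilOp_exp_add {τ : ℝ} (hG : IsLayerFunction Γ K M γ h G)
    (hc : IsSymmetricPerturbation neighborSteps axisSteps c₀ B (2 * L * h) c w) (hc₀ : 0 ≤ c₀)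
    (hh : 0 ≤ h) (hμ : 1 ≤ μ) (hμL : 32 * L + 1 ≤ c₀ / 2 * μ) (hμh : μ * h ≤ 1) (hz : -1 ≤ z.1)
    (hτ : 0 ≤ τ) (hτM : 1 + (4 * B + 16 * L) * M ≤ τ) {k : ℤ × ℤ} (hk : k ∈ axisSteps) :
    h ^ 2 + c₀ / 2 * (secondDiff G z (gridStep h k) + M * h ^ 2) ≤
      stencilOp neighborSteps (gridStep h) c (τ • (fun z ↦ Real.exp (μ * (z.1 + 1))) + G) z := by
  have hexp := sq_le_stencilOp_exp hc hc₀ hh hμ hμL hμh hz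
  simp only [map_smul, map_add, Pi.smul_apply, Pi.add_apply, smul_eq_mul]
  linarith [hG.le_stencilOp (z := z) hc hh hk, mul_le_mul_of_nonneg_left hexp hτ,
    mul_le_mul_of_nonneg_right hτM (sq_nonneg h)]

/-- A function bounded by `Z` on the square whose image under the principal part of `h ^ 2 * L_h`
exceeds `h ^ 2`, and even exceeds `h` in the layer of width `K h` around `Γ`. -/
structure IsBarrier (a11 a22 a12 : ℝ × ℝ → ℝ) (Γ : Set (ℝ × ℝ)) (K Z h : ℝ) (Ψ : ℝ × ℝ → ℝ) :
    Prop where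
  abs_le : ∀ z ∈ Q2, |Ψ z| ≤ Z
  sq_lt : ∀ z, Metric.closedBall z h ⊆ Q2 → h ^ 2 < stencilOp neighborSteps (gridStep h)
    (sevenPointWeight a11 a22 a12 (mixedSign (a12 z)) h z) Ψ z
  lt_of_dist_le : ∀ z, Metric.closedBall z h ⊆ Q2 → ∀ w ∈ Γ, dist z w ≤ K * h →
    h < stencilOp neighborSteps (gridStep h)
      (sevenPointWeight a11 a22 a12 (mixedSign (a12 z)) h z) Ψ z

variable {a11 a22 a12 : ℝ × ℝ → ℝ}

theorem IsLayerFunction.isBarrier {L : NNReal} {ρ τ : ℝ} (hG : IsLayerFunction Γ K M γ h G)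
    (hc : IsDominatedCoeff a11 a22 a12 L c₀ B) (hc₀ : 0 ≤ c₀) (hh : 0 < h) (hμ : 1 ≤ μ)
    (hμL : 32 * L + 1 ≤ c₀ / 2 * μ) (hμh : μ * h ≤ 1) (hρ : 1 < ρ) (hργ : 1 ≤ ρ * (c₀ / 2 * γ))
    (hτ : 0 ≤ τ) (hτM : 1 + (4 * B + 16 * L) * M ≤ τ) :
    IsBarrier a11 a22 a12 Γ K (ρ * (τ * Real.exp (μ * 2) + M)) h
      (ρ • (τ • (fun z ↦ Real.exp (μ * (z.1 + 1))) + G)) := by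
  have := hG.bound_nonneg
  have hρ0 : 0 < ρ := one_pos.trans hρ
  have hlower : ∀ z, Metric.closedBall z h ⊆ Q2 → ∀ k ∈ axisSteps,
      ρ * (h ^ 2 + c₀ / 2 * (secondDiff G z (gridStep h k) + M * h ^ 2)) ≤
        stencilOp neighborSteps (gridStep h) (sevenPointWeight a11 a22 a12 (mixedSign (a12 z)) h z)
          (ρ • (τ • (fun z ↦ Real.exp (μ * (z.1 + 1))) + G)) z := by
    intro z hz k hk
    rw [map_smul, Pi.smul_apply, smul_eq_mul]
    exact mul_le_mul_of_nonneg_left (hG.sq_add_le_stencilOp_exp_add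
      (hc.isSymmetricPerturbation hc₀ hh.le hz) hc₀ hh.le hμ hμL hμh
      (hz (Metric.mem_closedBall_self hh.le)).1.1 hτ hτM hk) hρ0.le
  refine ⟨fun z hz ↦ ?_, fun z hz ↦ ?_, fun z hz w hw hzw ↦ ?_⟩
  · have hexp_le : Real.exp (μ * (z.1 + 1)) ≤ Real.exp (μ * 2) :=
      Real.exp_le_exp.2 (mul_le_mul_of_nonneg_left (by linarith [hz.2.1]) (by linarith))
    simp only [Pi.smul_apply, Pi.add_apply, smul_eq_mul]
    rw [abs_mul, abs_of_pos hρ0]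
    refine mul_le_mul_of_nonneg_left ((abs_add_le _ _).trans (add_le_add ?_ (hG.abs_le z hz)))
      hρ0.le
    rw [abs_of_nonneg (by positivity)]
    exact mul_le_mul_of_nonneg_left hexp_le hτ
  · refine lt_of_lt_of_le ?_ (hlower z hz (1, 0) (by decide))
    have hconvex := hG.neg_le_secondDiff_gridStep hh.le z (k := (1, 0)) (by decide)
    refine (lt_mul_of_one_lt_left (pow_pos hh 2) hρ).trans_le (mul_le_mul_of_nonneg_left ?_ hρ0.le)
    exact le_add_of_nonneg_right (mul_nonneg (by positivity) (by linarith))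
  · obtain ⟨k, hk, hgain⟩ := hG.gain z w hw hzw
    refine lt_of_lt_of_le ?_ (hlower z hz k hk)
    calc h ≤ ρ * (c₀ / 2 * γ) * h := le_mul_of_one_le_left hh.le hργ
      _ < ρ * (h ^ 2 + c₀ / 2 * (γ * h)) := by
        rw [mul_assoc, mul_assoc]
        exact mul_lt_mul_of_pos_left (lt_add_of_pos_left _ (pow_pos hh 2)) hρ0
      _ ≤ _ := by
        have := sub_le_iff_le_add.1 hgain
        gcongr

theorem HasLayerFunctions.exists_isBarrier {L : NNReal} (hΓ : HasLayerFunctions K Γ)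
    (hc : IsDominatedCoeff a11 a22 a12 L c₀ B) (hc₀ : 0 < c₀) :
    ∃ Z > 0, ∃ h₀ > 0, ∀ h ∈ Ioo 0 h₀, ∃ Ψ, IsBarrier a11 a22 a12 Γ K Z h Ψ := by
  obtain ⟨M, γ, hγ, hG⟩ := hΓ
  obtain ⟨G₁, hG₁⟩ := hG 1 ⟨one_pos, le_rfl⟩
  have hM := hG₁.bound_nonneg
  obtain ⟨μ, hμ, hμL⟩ : ∃ μ : ℝ, 1 ≤ μ ∧ 32 * L + 1 ≤ c₀ / 2 * μ :=
    ⟨max 1 ((32 * L + 1) / (c₀ / 2)), le_max_left _ _,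
      (div_le_iff₀' (half_pos hc₀)).1 (le_max_right _ _)⟩
  obtain ⟨ρ, hρ, hργ⟩ : ∃ ρ : ℝ, 1 < ρ ∧ 1 ≤ ρ * (c₀ / 2 * γ) :=
    ⟨max 2 (1 / (c₀ / 2 * γ)), one_lt_two.trans_le (le_max_left _ _),
      (div_le_iff₀ (by positivity)).1 (le_max_right _ _)⟩
  obtain ⟨τ, hτ, hτM⟩ : ∃ τ : ℝ, 0 < τ ∧ 1 + (4 * B + 16 * L) * M ≤ τ :=
    ⟨max 1 (1 + (4 * B + 16 * L) * M), one_pos.trans_le (le_max_left _ _), le_max_right _ _⟩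
  refine ⟨ρ * (τ * Real.exp (μ * 2) + M), by positivity, μ⁻¹, by positivity, fun h hh ↦ ?_⟩
  have hμh : μ * h ≤ 1 := ((lt_inv_mul_iff₀ (by positivity)).1 ((mul_one μ⁻¹).symm ▸ hh.2)).le
  obtain ⟨G, hG⟩ := hG h ⟨hh.1, by nlinarith [hh.1]⟩
  exact ⟨_, hG.isBarrier hc hc₀.le hh.1 hμ hμL hμh hρ hργ hτ.le hτM⟩

end Barrier

section Grid

variable {Γ : Set (ℝ × ℝ)} {K Z c₀ B h : ℝ} {a11 a22 a12 a e Ψ : ℝ × ℝ → ℝ} {z : ℝ × ℝ} {N : ℕ}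

theorem stencilOp_congr {G κ : Type*} [AddCommGroup G] {S : Finset κ} {σ : κ → G} {u v : G → ℝ}
    {x : G} (hx : u x = v x) (hS : ∀ k ∈ S, u (x + σ k) = v (x + σ k)) (c : κ → ℝ) :
    stencilOp S σ c u x = stencilOp S σ c v x := by
  rw [stencilOp_apply, stencilOp_apply]
  exact Finset.sum_congr rfl fun k hk ↦ by rw [hx, hS k hk]

theorem IsDominatedCoeff.exists_isNearlyMonotone {L : NNReal}
    (hc : IsDominatedCoeff a11 a22 a12 L c₀ B) (hc₀ : 0 < c₀) {D : ℝ} (hD : 0 ≤ D) :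
    ∃ α : ℝ, 0 ≤ α ∧ 4 * α * axisSteps.card ≤ 1 ∧ ∃ h₀ > 0, ∀ h ∈ Ioo 0 h₀, ∀ z,
      Metric.closedBall z h ⊆ Q2 → ∀ s ∈ Icc 0 D, IsNearlyMonotone neighborSteps axisSteps
        (c₀ / 2) α (sevenPointWeight a11 a22 a12 (mixedSign (a12 z)) h z) s := by
  have hB : c₀ ≤ B := by
    linarith [hc.dominated11 0 zero_mem_Q2, hc.le_bound11 0 zero_mem_Q2, abs_nonneg (a12 0)]
  have hB0 : 0 < B := hc₀.trans_le hB
  have haxis : (axisSteps.card : ℝ) = 4 := by norm_num [axisSteps]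
  have hneighbor : (neighborSteps.card : ℝ) = 8 := by norm_num [neighborSteps]
  obtain ⟨α, hα, hα16, hαD⟩ : ∃ α : ℝ, 0 < α ∧ 16 * α ≤ 1 ∧ α * (8 * (B + c₀) + D) ≤ c₀ / 4 :=
    ⟨min (1 / 16) (c₀ / 4 / (8 * (B + c₀) + D)), by positivity,
      (le_div_iff₀' (by norm_num)).1 (min_le_left _ _),
      (le_div_iff₀ (by positivity)).1 (min_le_right _ _)⟩
  refine ⟨α, hα.le, by rw [haxis]; linarith, α * c₀ / 4 / (16 * (L + 1)), by positivity,
    fun h hh z hz s hs ↦ ?_⟩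
  have hδ : 8 * (2 * L * h) ≤ α * c₀ / 4 := by
    linarith [(lt_div_iff₀ (by positivity)).1 hh.2, hh.1]
  have hαc₀ : 16 * (α * c₀) ≤ c₀ := by
    rw [← mul_assoc]
    exact mul_le_of_le_one_left hc₀.le hα16
  refine (hc.isSymmetricPerturbation hc₀.le hh.1.le hz).isNearlyMonotone
    (isGeneratedStencil_neighborSteps h).subset hs.1 (by linarith) (hneighbor ▸ hδ) hα.le ?_
  rw [hneighbor]
  refine (mul_le_mul_of_nonneg_left ?_ hα.le).trans hαD
  linarith [hs.2]

/-- The nodes of the grid of mesh size `2 / N` that lie in the open square. -/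
def interiorNodes (N : ℕ) : Set (ℝ × ℝ) :=
  {z | ∃ i j : ℕ, (1 ≤ i ∧ i ≤ N - 1) ∧ (1 ≤ j ∧ j ≤ N - 1) ∧ nodePt N i j = z}

theorem finite_interiorNodes (N : ℕ) : (interiorNodes N).Finite := by
  refine (((finite_Icc 1 (N - 1)).prod (finite_Icc 1 (N - 1))).image
    fun p ↦ nodePt N p.1 p.2).subset ?_
  rintro _ ⟨i, j, hi, hj, rfl⟩
  exact ⟨(i, j), ⟨hi, hj⟩, rfl⟩

theorem meshSize_pos_of_mem_interiorNodes (hz : z ∈ interiorNodes N) : 0 < 2 / (N : ℝ) := by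
  obtain ⟨_, _, ⟨hi, hiN⟩, _⟩ := hz
  have : 0 < N := hi.trans (hiN.trans (Nat.sub_le _ _))
  positivity

theorem closedBall_subset_Q2_of_mem_interiorNodes (hz : z ∈ interiorNodes N) :
    Metric.closedBall z (2 / N) ⊆ Q2 := by
  obtain ⟨i, j, hi, hj, rfl⟩ := hz
  have hN : (N : ℝ) * (2 / N) = 2 := mul_div_cancel₀ _ (by norm_cast; omega)
  have hcoord : ∀ {i : ℕ}, 1 ≤ i ∧ i ≤ N - 1 → ∀ {t : ℝ},
      |t - (-1 + i * (2 / (N : ℝ)))| ≤ 2 / N → t ∈ Icc (-1) 1 := by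
    intro i hi t ht
    have hi1 : (1 : ℝ) ≤ i := by exact_mod_cast hi.1
    have hiN : (i : ℝ) + 1 ≤ N := by norm_cast; omega
    have hh : 0 ≤ 2 / (N : ℝ) := by positivity
    obtain ⟨hlo, hhi⟩ := abs_le.1 ht
    constructor <;>
      nlinarith [mul_le_mul_of_nonneg_right hi1 hh, mul_le_mul_of_nonneg_right hiN hh]
  intro p hp
  obtain ⟨hp1, hp2⟩ := max_le_iff.1 (Prod.dist_eq (x := p) ▸ Metric.mem_closedBall.1 hp)
  exact ⟨⟨(hcoord hi hp1).1, (hcoord hj hp2).1⟩, ⟨(hcoord hi hp1).2, (hcoord hj hp2).2⟩⟩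

theorem exists_nodePt_eq_add_gridStep (hz : z ∈ interiorNodes N) {k : ℤ × ℤ}
    (hk : k ∈ neighborSteps) :
    ∃ i ≤ N, ∃ j ≤ N, nodePt N i j = z + gridStep (2 / N) k := by
  obtain ⟨i, j, hi, hj, rfl⟩ := hz
  have hk1 : (-1 ≤ k.1 ∧ k.1 ≤ 1) ∧ -1 ≤ k.2 ∧ k.2 ≤ 1 := by revert k; decide
  have hcast : ∀ {i : ℕ} {l : ℤ}, 1 ≤ i → -1 ≤ l → (((i + l).toNat : ℕ) : ℝ) = i + l :=
    fun {i l} hi hl ↦ by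
      have : ((i + l).toNat : ℤ) = i + l := Int.toNat_of_nonneg (by omega)
      exact_mod_cast this
  refine ⟨(i + k.1).toNat, by omega, (j + k.2).toNat, by omega, ?_⟩
  rw [nodePt, nodePt, hcast hi.1 hk1.1.1, hcast hj.1 hk1.2.1]
  ext <;> simp only [gridStep, Prod.fst_add, Prod.snd_add, Prod.smul_fst, Prod.smul_snd,
    smul_eq_mul] <;> ring

theorem nodePt_mem_interiorNodes_or {i j : ℕ} (hi : i ≤ N) (hj : j ≤ N) :
    nodePt N i j ∈ interiorNodes N ∨ i = 0 ∨ i = N ∨ j = 0 ∨ j = N := by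
  by_contra! hboundary
  exact hboundary.1 ⟨i, j, by omega, by omega, rfl⟩

theorem exists_dist_le_of_distToCurve_le {r : ℝ → ℝ × ℝ} {δ ε : ℝ} (hδε : δ < ε)
    (hz : distToCurve r z ≤ δ) : ∃ w ∈ r '' Icc 0 1, dist z w ≤ ε := by
  obtain ⟨_, ⟨t, ht, rfl⟩, hlt⟩ := exists_lt_of_csInf_lt
    ((nonempty_Icc.2 zero_le_one).image _) (hz.trans_lt hδε)
  exact ⟨r t, mem_image_of_mem r ht, (max_le (Real.abs_le_sqrt (by nlinarith))
    (Real.abs_le_sqrt (by nlinarith))).trans hlt.le⟩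

theorem stencilOp_indicator_interiorNodes
    (hzero : ∀ i ≤ N, ∀ j ≤ N, nodePt N i j ∉ interiorNodes N → e (nodePt N i j) = 0)
    (hz : z ∈ interiorNodes N) (c : ℤ × ℤ → ℝ) :
    stencilOp neighborSteps (gridStep (2 / N)) c (indicator (interiorNodes N) e) z =
      stencilOp neighborSteps (gridStep (2 / N)) c e z := by
  refine stencilOp_congr (indicator_of_mem hz e) (fun k hk ↦ ?_) c
  obtain ⟨i, hi, j, hj, hij⟩ := exists_nodePt_eq_add_gridStep hz hk
  rw [← hij]
  by_cases hmem : nodePt N i j ∈ interiorNodes N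
  · exact indicator_of_mem hmem e
  · rw [indicator_of_notMem hmem, hzero i hi j hj hmem]

theorem IsBarrier.exists_comparison (hΨ : IsBarrier a11 a22 a12 Γ K Z h Ψ) (hZ : 0 ≤ Z)
    (hh : 0 ≤ h) {C : ℝ} (hC : 0 ≤ C) :
    ∃ Φ : ℝ × ℝ → ℝ, (∀ y, Φ y ∈ Icc (2 * Z * C) (2 * (2 * Z * C))) ∧
      ∀ y, Metric.closedBall y h ⊆ Q2 → ∀ c, stencilOp neighborSteps (gridStep h) c Φ y =
        -(C * stencilOp neighborSteps (gridStep h) c Ψ y) := by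
  refine ⟨fun y ↦ C * (3 * Z - indicator Q2 Ψ y), fun y ↦ ?_, fun y hy c ↦ ?_⟩
  · have hbound : |indicator Q2 Ψ y| ≤ Z := by
      by_cases hyQ : y ∈ Q2
      · rw [indicator_of_mem hyQ]
        exact hΨ.abs_le y hyQ
      · rwa [indicator_of_notMem hyQ, abs_zero]
    obtain ⟨hlo, hhi⟩ := _root_.abs_le.1 hbound
    constructor <;> nlinarith
  · have hyQ : y ∈ Q2 := hy (Metric.mem_closedBall_self hh)
    have hQ : ∀ k ∈ neighborSteps, y + gridStep h k ∈ Q2 := fun k hk ↦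
      hy (by simpa using norm_gridStep_le hh hk)
    rw [stencilOp_congr (v := fun y ↦ C * (3 * Z - Ψ y)) (by rw [indicator_of_mem hyQ])
      fun k hk ↦ by rw [indicator_of_mem (hQ k hk)]]
    rw [stencilOp_apply, stencilOp_apply, Finset.mul_sum, ← Finset.sum_neg_distrib]
    exact Finset.sum_congr rfl fun k _ ↦ by ring

theorem IsBarrier.abs_le_of_mem_interiorNodes {α Cb : ℝ}
    (hΨ : IsBarrier a11 a22 a12 Γ K Z (2 / N) Ψ) (hZ : 0 < Z) (hc₀ : 0 ≤ c₀) (hα : 0 ≤ α)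
    (hα4 : 4 * α * axisSteps.card ≤ 1) (hCb : 0 < Cb)
    (hmono : ∀ z ∈ interiorNodes N, IsNearlyMonotone neighborSteps axisSteps c₀ α
      (sevenPointWeight a11 a22 a12 (mixedSign (a12 z)) (2 / N) z) ((2 / N) ^ 2 * a z))
    (hzero : ∀ i ≤ N, ∀ j ≤ N, nodePt N i j ∉ interiorNodes N → e (nodePt N i j) = 0)
    (hres : ∀ z ∈ interiorNodes N, |Lh a11 a22 a12 a (2 / N) e z| ≤ Cb * (2 / N) ^ 2 ∨
      |Lh a11 a22 a12 a (2 / N) e z| ≤ Cb * (2 / N) ∧ ∃ w ∈ Γ, dist z w ≤ K * (2 / N))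
    (hz : z ∈ interiorNodes N) : |e z| ≤ 4 * Z * Cb * (2 / N) ^ 2 := by
  have hh := meshSize_pos_of_mem_interiorNodes hz
  obtain ⟨Φ, hΦ, hΦΨ⟩ := hΨ.exists_comparison hZ.le hh.le
    (show 0 ≤ Cb * (2 / (N : ℝ)) ^ 2 by positivity)
  have hΩ : ∀ y, y ∈ (finite_interiorNodes N).toFinset ↔ y ∈ interiorNodes N := fun y ↦
    Finite.mem_toFinset _
  have hcompare := abs_le_of_stencilOp_lt (Ω := (finite_interiorNodes N).toFinset) (Φ := Φ)
    (E := indicator (interiorNodes N) e) (isGeneratedStencil_neighborSteps (2 / N)) hc₀ hα hα4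
    (by positivity) hΦ (fun y hy ↦ indicator_of_notMem (mt (hΩ y).2 hy) e)
    (fun y hy ↦ ?_) z
  · rw [indicator_of_mem hz] at hcompare
    exact hcompare.trans ((hΦ z).2.trans_eq (by ring))
  rw [hΩ] at hy
  have hball := closedBall_subset_Q2_of_mem_interiorNodes hy
  refine ⟨_, _, hmono y hy, ?_⟩
  rw [stencilOp_indicator_interiorNodes hzero hy, indicator_of_mem hy,
    stencilOp_sevenPointWeight_sub _ _ _ _ hh.ne', abs_mul, abs_of_pos (pow_pos hh 2), hΦΨ y hball,
    neg_sub, sub_neg_eq_add]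
  refine lt_add_of_nonneg_of_lt (mul_nonneg (hmono y hy).zeroth_nonneg
    (le_trans (by positivity) (hΦ y).1)) ?_
  rcases hres y hy with hfar | ⟨hnear, w, hw, hdist⟩
  · calc _ ≤ (2 / (N : ℝ)) ^ 2 * (Cb * (2 / N) ^ 2) := by gcongr
      _ = Cb * (2 / N) ^ 2 * (2 / N) ^ 2 := by ring
      _ < _ := mul_lt_mul_of_pos_left (hΨ.sq_lt y hball) (by positivity)
  · calc _ ≤ (2 / (N : ℝ)) ^ 2 * (Cb * (2 / N)) := by gcongr
      _ = Cb * (2 / N) ^ 2 * (2 / N) := by ring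
      _ < _ := mul_lt_mul_of_pos_left (hΨ.lt_of_dist_le y hball w hw hdist) (by positivity)

theorem IsDominatedCoeff.exists_forall_abs_le {L : NNReal}
    (hc : IsDominatedCoeff a11 a22 a12 L c₀ B) (hc₀ : 0 < c₀) (ha : BddAbove (a '' Q2))
    (ha0 : ∀ z ∈ Q2, 0 ≤ a z) (hΓ : HasLayerFunctions K Γ) :
    ∃ C > 0, ∃ h₀ > 0, ∀ N : ℕ, 2 / (N : ℝ) < h₀ → ∀ Cb > 0, ∀ e : ℝ × ℝ → ℝ,
      (∀ i ≤ N, ∀ j ≤ N, nodePt N i j ∉ interiorNodes N → e (nodePt N i j) = 0) →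
      (∀ z ∈ interiorNodes N, |Lh a11 a22 a12 a (2 / N) e z| ≤ Cb * (2 / N) ^ 2 ∨
        |Lh a11 a22 a12 a (2 / N) e z| ≤ Cb * (2 / N) ∧ ∃ w ∈ Γ, dist z w ≤ K * (2 / N)) →
      ∀ z ∈ interiorNodes N, |e z| ≤ C * Cb * (2 / N) ^ 2 := by
  obtain ⟨D, hD⟩ := ha
  have haD : ∀ z ∈ Q2, a z ≤ D := fun z hz ↦ hD (mem_image_of_mem a hz)
  obtain ⟨Z, hZ, h₁, hh₁, hbarrier⟩ := hΓ.exists_isBarrier hc hc₀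
  obtain ⟨α, hα, hα4, h₂, hh₂, hmono⟩ := hc.exists_isNearlyMonotone hc₀
    ((ha0 0 zero_mem_Q2).trans (haD 0 zero_mem_Q2))
  refine ⟨4 * Z, by positivity, min 1 (min h₁ h₂), by positivity,
    fun N hNh Cb hCb e hzero hres z hz ↦ ?_⟩
  have hh := meshSize_pos_of_mem_interiorNodes hz
  obtain ⟨hh1, hhh₁, hhh₂⟩ : 2 / (N : ℝ) < 1 ∧ 2 / (N : ℝ) < h₁ ∧ 2 / (N : ℝ) < h₂ := by
    simpa only [lt_min_iff] using hNh
  obtain ⟨Ψ, hΨ⟩ := hbarrier _ ⟨hh, hhh₁⟩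
  refine hΨ.abs_le_of_mem_interiorNodes hZ (half_pos hc₀).le hα hα4 hCb (fun y hy ↦ ?_)
    hzero hres hz
  have hball := closedBall_subset_Q2_of_mem_interiorNodes hy
  have hyQ : y ∈ Q2 := hball (Metric.mem_closedBall_self hh.le)
  refine hmono _ ⟨hh, hhh₂⟩ y hball _ ⟨mul_nonneg (sq_nonneg _) (ha0 y hyQ), ?_⟩
  exact (mul_le_of_le_one_left (ha0 y hyQ) (pow_le_one₀ hh.le hh1.le)).trans (haD y hyQ)

end Grid

theorem C21On.exists_lipschitzOnWith {f : ℝ × ℝ → ℝ} (hf : C21On f Q2) :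
    ∃ L, LipschitzOnWith L f Q2 :=
  hf.1.exists_lipschitzOnWith two_ne_zero (convex_Icc _ _) isCompact_Q2

theorem stmt2_general (a11 a22 a12 a : ℝ × ℝ → ℝ)
    (h11 : ∃ L, LipschitzOnWith L a11 Q2) (h22 : ∃ L, LipschitzOnWith L a22 Q2)
    (h12 : ∃ L, LipschitzOnWith L a12 Q2) (hdom : ∀ z ∈ Q2, |a12 z| < min (a11 z) (a22 z))
    (ha : BddAbove (a '' Q2)) (ha0 : ∀ z ∈ Q2, 0 ≤ a z)
    (r : ℝ → ℝ × ℝ) (hr : ContDiffOn ℝ 2 r (Icc 0 1))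
    (hrreg : ∀ t ∈ Icc (0 : ℝ) 1, derivWithin r (Icc 0 1) t ≠ 0)
    (K : ℝ) (hK : 0 < K) :
    ∃ C > (0 : ℝ), ∃ h₀ > (0 : ℝ), ∀ N : ℕ, 2 / (N : ℝ) < h₀ →
      ∀ Cb : ℝ, 0 < Cb → ∀ e : ℝ × ℝ → ℝ,
        (∀ i j : ℕ, i ≤ N → j ≤ N → (i = 0 ∨ i = N ∨ j = 0 ∨ j = N) →
          e (nodePt N i j) = 0) →
        (∀ i j : ℕ, 1 ≤ i → i ≤ N - 1 → 1 ≤ j → j ≤ N - 1 →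
          distToCurve r (nodePt N i j) ≤ K * (2 / (N : ℝ)) →
          |Lh a11 a22 a12 a (2 / (N : ℝ)) e (nodePt N i j)| ≤ Cb * (2 / (N : ℝ))) →
        (∀ i j : ℕ, 1 ≤ i → i ≤ N - 1 → 1 ≤ j → j ≤ N - 1 →
          ¬(distToCurve r (nodePt N i j) ≤ K * (2 / (N : ℝ))) →
          |Lh a11 a22 a12 a (2 / (N : ℝ)) e (nodePt N i j)| ≤ Cb * (2 / (N : ℝ)) ^ 2) →
        ∀ i j : ℕ, i ≤ N → j ≤ N →
          |e (nodePt N i j)| ≤ C * Cb * (2 / (N : ℝ)) ^ 2 := by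
  obtain ⟨_, h11⟩ := h11
  obtain ⟨_, h22⟩ := h22
  obtain ⟨_, h12⟩ := h12
  obtain ⟨L, c₀, B, hc₀, hc⟩ := exists_isDominatedCoeff h11 h22 h12 hdom
  obtain ⟨C, hC, h₀, hh₀, hbound⟩ := hc.exists_forall_abs_le hc₀ ha ha0
    (hasLayerFunctions_image_of_derivWithin_ne_zero hr hrreg (K := 2 * K) (by positivity))
  refine ⟨C, hC, h₀, hh₀, fun N hN Cb hCb e hzero hnear hfar i j hi hj ↦ ?_⟩
  by_cases hint : nodePt N i j ∈ interiorNodes N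
  · have hh := meshSize_pos_of_mem_interiorNodes hint
    refine hbound N hN Cb hCb e (fun i hi j hj hij ↦ hzero i j hi hj
      ((nodePt_mem_interiorNodes_or hi hj).resolve_left hij)) ?_ _ hint
    rintro _ ⟨i, j, ⟨hi, hiN⟩, ⟨hj, hjN⟩, rfl⟩
    by_cases hdist : distToCurve r (nodePt N i j) ≤ K * (2 / (N : ℝ))
    · exact .inr ⟨hnear i j hi hiN hj hjN hdist,
        exists_dist_le_of_distToCurve_le (by nlinarith [mul_pos hK hh]) hdist⟩
    · exact .inl (hfar i j hi hiN hj hjN hdist)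
  · rw [hzero i j hi hj ((nodePt_mem_interiorNodes_or hi hj).resolve_left hint), abs_zero]
    positivity

/-- Convergence theorem for the corrected scheme: a grid function vanishing at boundary
nodes whose `L_h`-image is `O(h)` at interior nodes within distance `K h` of the interface
curve `γ` and `O(h²)` at all other interior nodes is itself uniformly `O(h²)`. -/
theorem stmt2 (a11 a22 a12 a : ℝ × ℝ → ℝ)
    (ha11 : C21On a11 Q2) (ha22 : C21On a22 Q2) (ha12 : C21On a12 Q2)
    (hpd : ∀ z ∈ Q2, (!![a11 z, a12 z; a12 z, a22 z] : Matrix (Fin 2) (Fin 2) ℝ).PosDef)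
    (hdom : ∀ z ∈ Q2, |a12 z| < min (a11 z) (a22 z))
    (ha : ContinuousOn a Q2) (ha0 : ∀ z ∈ Q2, 0 ≤ a z)
    (r : ℝ → ℝ × ℝ) (hr : ContDiffOn ℝ 2 r (Icc 0 1))
    (hrim : ∀ t ∈ Icc (0 : ℝ) 1, r t ∈ Ioo (-1 : ℝ) 1 ×ˢ Ioo (-1 : ℝ) 1)
    (hrcl : r 0 = r 1) (hrinj : InjOn r (Ico 0 1))
    (hrreg : ∀ t ∈ Icc (0 : ℝ) 1, derivWithin r (Icc 0 1) t ≠ 0)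
    (K : ℝ) (hK : 0 < K) :
    ∃ C > (0 : ℝ), ∃ h₀ > (0 : ℝ), ∀ N : ℕ, Even N → 2 / (N : ℝ) < h₀ →
      ∀ Cb : ℝ, 0 < Cb → ∀ e : ℝ × ℝ → ℝ,
        (∀ i j : ℕ, i ≤ N → j ≤ N → (i = 0 ∨ i = N ∨ j = 0 ∨ j = N) →
          e (nodePt N i j) = 0) →
        (∀ i j : ℕ, 1 ≤ i → i ≤ N - 1 → 1 ≤ j → j ≤ N - 1 →
          distToCurve r (nodePt N i j) ≤ K * (2 / (N : ℝ)) →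
          |Lh a11 a22 a12 a (2 / (N : ℝ)) e (nodePt N i j)| ≤ Cb * (2 / (N : ℝ))) →
        (∀ i j : ℕ, 1 ≤ i → i ≤ N - 1 → 1 ≤ j → j ≤ N - 1 →
          ¬(distToCurve r (nodePt N i j) ≤ K * (2 / (N : ℝ))) →
          |Lh a11 a22 a12 a (2 / (N : ℝ)) e (nodePt N i j)| ≤ Cb * (2 / (N : ℝ)) ^ 2) →
        ∀ i j : ℕ, i ≤ N → j ≤ N →
          |e (nodePt N i j)| ≤ C * Cb * (2 / (N : ℝ)) ^ 2 := by
  obtain ⟨C, hC, h₀, hh₀, hbound⟩ := stmt2_general a11 a22 a12 a ha11.exists_lipschitzOnWith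
    ha22.exists_lipschitzOnWith ha12.exists_lipschitzOnWith hdom (isCompact_Q2.bddAbove_image ha)
    ha0 r hr hrreg K hK
  exact ⟨C, hC, h₀, hh₀, fun N _ ↦ hbound N⟩
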